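/- arXiv:1312.7554 — 3 statements merged into one kernel-verified Lean document; each statement's English description precedes it below -/
import Mathlib

section
/- Let d ≥ 3 and fix j with 0 ≤ j ≤ d−2. The set {(c,a) ∈ ℂ^{d−1} : the orbit of the critical point c_j under P_{c,a} is unbounded} (equivalently, {(c,a) : g_{c,a}(c_j) > 0}) is an open connected subset of ℂ^{d−1}. -/
open Filter Topology MeasureTheory

/-- Elementary symmetric polynomial of degree `m` in the values of `c`. -/
noncomputable def sigmaE {n : ℕ} (c : Fin n → ℂ) (m : ℕ) : ℂ :=
  (Multiset.map c Finset.univ.val).esymm m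

/-- The polynomial `P_{c,a}`. -/
noncomputable def Pca (d : ℕ) (c : Fin (d - 2) → ℂ) (a : ℂ) (z : ℂ) : ℂ :=
  z ^ d / (d : ℂ) +
    (∑ j ∈ Finset.Icc 2 (d - 1), (-1 : ℂ) ^ (d - j) * sigmaE c (d - j) * z ^ j / (j : ℂ)) +
    a ^ d

/-- The critical points `c₀ = 0, c₁, …, c_{d-2}` of `P_{c,a}`. -/
noncomputable def critPt {d : ℕ} (c : Fin (d - 2) → ℂ) (i : Fin (d - 1)) : ℂ :=
  if h : (i : ℕ) = 0 then 0 else c ⟨(i : ℕ) - 1, by have := i.isLt; omega⟩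

/-- The orbit of `z` under `P_{c,a}` is bounded. -/
def boundedOrbit (d : ℕ) (c : Fin (d - 2) → ℂ) (a z : ℂ) : Prop :=
  Bornology.IsBounded (Set.range fun n => (Pca d c a)^[n] z)

/-- The Green function of `P_{c,a}`. -/
noncomputable def green (d : ℕ) (c : Fin (d - 2) → ℂ) (a z : ℂ) : ℝ :=
  limUnder atTop (fun n : ℕ => Real.log (max 1 ‖(Pca d c a)^[n] z‖) / (d : ℝ) ^ n)

/-- `G(c,a)`, the max of the Green function over the critical points. -/
noncomputable def Gmax (d : ℕ) (c : Fin (d - 2) → ℂ) (a : ℂ) : ℝ :=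
  ⨆ i : Fin (d - 1), green d c a (critPt c i)

/-- The connectedness locus `C_d`. -/
def connLocus (d : ℕ) : Set ((Fin (d - 2) → ℂ) × ℂ) :=
  {p | ∀ i : Fin (d - 1), boundedOrbit d p.1 p.2 (critPt p.1 i)}

/-- The filled-in Julia set of `P_{c,a}`. -/
def filledJulia (d : ℕ) (c : Fin (d - 2) → ℂ) (a : ℂ) : Set ℂ :=
  {z | boundedOrbit d c a z}

/-!
The Green function never enters. On a slice `{c} × ℂ`, the iterates of the marked point are entire
functions of `a`. If a component of the escaping parameters in that slice were bounded, its frontier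
would consist of parameters with bounded orbits, hence with orbits inside a uniform escape disc, and
the maximum modulus principle would carry this bound into the component. So every component of every
slice is unbounded, and therefore meets the region `{(c, a) | T c < ‖a‖}`, where the term `a ^ d`
dominates and the marked point escapes immediately. This region is connected because it fibres over
the parameters `c` into complements of discs.
-/

open Set Bornology Metric

section Connectedness

lemma disjoint_frontier_connectedComponentIn_of_isOpen {X : Type*} [TopologicalSpace X]
    [LocallyConnectedSpace X] {U : Set X} (hU : IsOpen U) (x : X) :
    Disjoint (frontier (connectedComponentIn U x)) U := by
  refine disjoint_left.2 fun z hz hzU => ?_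
  obtain ⟨w, hwz, hwx⟩ := mem_closure_iff_nhds.1 (frontier_subset_closure hz) _
    (hU.connectedComponentIn.mem_nhds (mem_connectedComponentIn hzU))
  have heq : connectedComponentIn U z = connectedComponentIn U x :=
    (connectedComponentIn_eq hwz).trans (connectedComponentIn_eq hwx).symm
  rw [hU.connectedComponentIn.frontier_eq] at hz
  exact hz.2 (heq ▸ mem_connectedComponentIn hzU)

lemma isPreconnected_of_forall_meets {X : Type*} [TopologicalSpace X] {s e : Set X} (hes : e ⊆ s)
    (he : IsPreconnected e)
    (h : ∀ y ∈ s, ∃ t ⊆ s, y ∈ t ∧ (t ∩ e).Nonempty ∧ IsPreconnected t) : IsPreconnected s := by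
  refine isPreconnected_of_forall_pair fun x hx y hy => ?_
  obtain ⟨t, hts, hxt, ⟨p, hpt, hpe⟩, ht⟩ := h x hx
  obtain ⟨u, hus, hyu, ⟨q, hqu, hqe⟩, hu⟩ := h y hy
  exact ⟨t ∪ e ∪ u, union_subset (union_subset hts hes) hus, .inl (.inl hxt), .inr hyu,
    (ht.union p hpt hpe he).union q (.inr hqe) hqu hu⟩

variable {X E : Type*} [TopologicalSpace X] [NormedAddCommGroup E] [NormedSpace ℝ E]

lemma isPreconnected_setOf_lt_norm_snd [PreconnectedSpace X] (hE : 1 < Module.rank ℝ E)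
    {T : X → ℝ} (hT : Continuous T) (hT_pos : ∀ x, 0 < T x) :
    IsPreconnected {p : X × E | T p.1 < ‖p.2‖} := by
  have h_image : {p : X × E | T p.1 < ‖p.2‖} =
      (fun q : X × ℝ × E => (q.1, (T q.1 * q.2.1) • q.2.2)) ''
        univ ×ˢ Ioi (1 : ℝ) ×ˢ sphere (0 : E) 1 := by
    ext ⟨x, v⟩
    have hx := hT_pos x
    constructor
    · intro (hv : T x < ‖v‖)
      have hv_pos : 0 < ‖v‖ := hx.trans hv
      refine ⟨(x, ‖v‖ / T x, ‖v‖⁻¹ • v), ⟨mem_univ _, (one_lt_div hx).2 hv, ?_⟩, ?_⟩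
      · simp [norm_smul, hv_pos.ne']
      · simp [mul_div_cancel₀ _ hx.ne', hv_pos.ne']
    · rintro ⟨⟨x, r, u⟩, ⟨-, hr, hu⟩, ⟨⟩⟩
      have hr : 1 < r := hr
      have hr_pos : 0 < r := one_pos.trans hr
      simpa [norm_smul, mem_sphere_zero_iff_norm.1 hu, abs_of_pos hx, abs_of_pos hr_pos] using
        lt_mul_of_one_lt_right hx hr
  rw [h_image]
  refine (isPreconnected_univ.prod
    (isPreconnected_Ioi.prod (isPreconnected_sphere hE 0 1))).image _ ?_
  fun_prop

lemma isConnected_of_not_isBounded_fiber_components [ConnectedSpace X]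
    (hE : 1 < Module.rank ℝ E) {S : Set (X × E)} {T : X → ℝ} (hT : Continuous T)
    (hTS : ∀ x v, T x < ‖v‖ → (x, v) ∈ S)
    (hS : ∀ x v, (x, v) ∈ S → ¬ IsBounded (connectedComponentIn (Prod.mk x ⁻¹' S) v)) :
    IsConnected S := by
  have : Nontrivial E := rank_pos_iff_nontrivial.1 (one_pos.trans hE)
  refine ⟨?_, isPreconnected_of_forall_meets (e := {p | max (T p.1) 1 < ‖p.2‖})
    (fun p hp => hTS p.1 p.2 ((le_max_left _ _).trans_lt hp))
    (isPreconnected_setOf_lt_norm_snd hE (hT.max continuous_const) fun _ => by positivity) ?_⟩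
  · obtain ⟨x⟩ := ‹ConnectedSpace X›.toNonempty
    obtain ⟨v, hv⟩ := NormedSpace.exists_lt_norm ℝ E (T x)
    exact ⟨(x, v), hTS x v hv⟩
  · rintro ⟨x, v⟩ hxv
    obtain ⟨w, hw, hw_large⟩ : ∃ w ∈ connectedComponentIn (Prod.mk x ⁻¹' S) v,
        max (T x) 1 < ‖w‖ := by
      by_contra! h
      exact hS x v hxv (isBounded_iff_forall_norm_le.2 ⟨_, h⟩)
    exact ⟨Prod.mk x '' connectedComponentIn (Prod.mk x ⁻¹' S) v,
      image_subset_iff.2 (connectedComponentIn_subset _ _),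
      mem_image_of_mem _ (mem_connectedComponentIn hxv),
      ⟨(x, w), mem_image_of_mem _ hw, hw_large⟩,
      isPreconnected_connectedComponentIn.image _ (by fun_prop)⟩

end Connectedness

section UnboundedLocus

/-- The set of parameters `x` at which a family of functions `F n` is unbounded in `n`. For
`F n` the `n`-th iterate of a marked point this is its escape locus. -/
def unboundedLocus {ι X V : Type*} [Bornology V] (F : ι → X → V) : Set X :=
  {x | ¬ IsBounded (range fun n => F n x)}

variable {ι V : Type*} [NormedAddCommGroup V]

lemma isOpen_unboundedLocus {X : Type*} [TopologicalSpace X] {F : ι → X → V} {R : X → ℝ}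
    (hF : ∀ n, Continuous (F n)) (hR : Continuous R)
    (hFR : ∀ x, IsBounded (range fun n => F n x) ↔ ∀ n, ‖F n x‖ ≤ R x) :
    IsOpen (unboundedLocus F) := by
  simp only [unboundedLocus, hFR, not_forall, not_le, ofPred_exists]
  exact isOpen_iUnion fun n => isOpen_lt hR (hF n).norm

lemma not_isBounded_connectedComponentIn_unboundedLocus {E : Type*} [NormedAddCommGroup E]
    [NormedSpace ℂ E] [ProperSpace E] [Nontrivial E] [NormedSpace ℂ V] {F : ι → E → V} {R : E → ℝ}
    (hF : ∀ n, Differentiable ℂ (F n)) (hR : Continuous R)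
    (hFR : ∀ x, IsBounded (range fun n => F n x) ↔ ∀ n, ‖F n x‖ ≤ R x)
    {x : E} (hx : x ∈ unboundedLocus F) :
    ¬ IsBounded (connectedComponentIn (unboundedLocus F) x) := by
  intro hC
  have h_open : IsOpen (unboundedLocus F) :=
    isOpen_unboundedLocus (fun n => (hF n).continuous) hR hFR
  obtain ⟨M, hM⟩ := hC.isCompact_closure.bddAbove_image hR.continuousOn
  have h_frontier : ∀ n, ∀ z ∈ frontier (connectedComponentIn (unboundedLocus F) x),
      ‖F n z‖ ≤ M := by
    intro n z hz
    have hz_bdd : IsBounded (range fun n => F n z) := not_not.1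
      (disjoint_left.1 (disjoint_frontier_connectedComponentIn_of_isOpen h_open x) hz)
    exact ((hFR z).1 hz_bdd n).trans (hM (mem_image_of_mem R (frontier_subset_closure hz)))
  refine hx (isBounded_iff_forall_norm_le.2 ⟨M, forall_mem_range.2 fun n => ?_⟩)
  exact Complex.norm_le_of_forall_mem_frontier_norm_le hC (hF n).diffContOnCl (h_frontier n)
    (subset_closure (mem_connectedComponentIn hx))

end UnboundedLocus

section Iteration

lemma continuous_iterate_apply {X Y : Type*} [TopologicalSpace X] [TopologicalSpace Y]
    {f : X → Y → Y} {g : X → Y} (hf : Continuous (Function.uncurry f)) (hg : Continuous g)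
    (n : ℕ) : Continuous fun x => (f x)^[n] (g x) := by
  induction n with
  | zero => exact hg
  | succ n ih =>
    simp only [Function.iterate_succ_apply']
    exact hf.comp (continuous_id.prodMk ih)

lemma differentiable_iterate_apply {𝕜 E F : Type*} [NontriviallyNormedField 𝕜]
    [NormedAddCommGroup E] [NormedSpace 𝕜 E] [NormedAddCommGroup F] [NormedSpace 𝕜 F]
    {f : E → F → F} {g : E → F} (hf : Differentiable 𝕜 (Function.uncurry f))
    (hg : Differentiable 𝕜 g) (n : ℕ) : Differentiable 𝕜 fun x => (f x)^[n] (g x) := by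
  induction n with
  | zero => exact hg
  | succ n ih =>
    simp only [Function.iterate_succ_apply']
    exact hf.comp (differentiable_id.prodMk ih)

variable {E : Type*} [SeminormedAddCommGroup E] {f : E → E} {k R : ℝ}

lemma pow_mul_norm_le_norm_iterate (hk : 1 ≤ k) (hf : ∀ z, R ≤ ‖z‖ → k * ‖z‖ ≤ ‖f z‖) {z : E}
    (hz : R ≤ ‖z‖) (n : ℕ) : k ^ n * ‖z‖ ≤ ‖f^[n] z‖ := by
  induction n with
  | zero => simp
  | succ n ih =>
    have hR : R ≤ ‖f^[n] z‖ :=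
      hz.trans ((le_mul_of_one_le_left (norm_nonneg z) (one_le_pow₀ hk)).trans ih)
    calc k ^ (n + 1) * ‖z‖ = k * (k ^ n * ‖z‖) := by ring
      _ ≤ k * ‖f^[n] z‖ := by gcongr
      _ ≤ ‖f^[n + 1] z‖ := by
        rw [Function.iterate_succ_apply']
        exact hf _ hR

lemma isBounded_range_iterate_iff (hk : 1 < k) (hR : 0 ≤ R)
    (hf : ∀ z, R ≤ ‖z‖ → k * ‖z‖ ≤ ‖f z‖) (z : E) :
    IsBounded (range fun n => f^[n] z) ↔ ∀ n, ‖f^[n] z‖ ≤ R := by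
  refine ⟨fun h => ?_, fun h => isBounded_iff_forall_norm_le.2 ⟨R, forall_mem_range.2 h⟩⟩
  by_contra! ⟨n, hn⟩
  obtain ⟨C, hC⟩ := h.exists_norm_le
  obtain ⟨m, hm⟩ := pow_unbounded_of_one_lt (C / ‖f^[n] z‖) hk
  have h_large : C < ‖f^[m + n] z‖ := by
    rw [Function.iterate_add_apply]
    exact ((div_lt_iff₀ (hR.trans_lt hn)).1 hm).trans_le
      (pow_mul_norm_le_norm_iterate hk.le hf hn.le m)
  exact h_large.not_ge (hC _ (mem_range_self (m + n)))

end Iteration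

section Family

@[fun_prop]
lemma continuous_sigmaE {n : ℕ} (m : ℕ) : Continuous fun c : Fin n → ℂ => sigmaE c m := by
  simp only [sigmaE, Finset.esymm_map_val]
  fun_prop

lemma continuous_critPt {d : ℕ} (i : Fin (d - 1)) :
    Continuous fun c : Fin (d - 2) → ℂ => critPt c i := by
  unfold critPt
  split_ifs <;> fun_prop

lemma continuous_Pca (d : ℕ) :
    Continuous fun q : ((Fin (d - 2) → ℂ) × ℂ) × ℂ => Pca d q.1.1 q.1.2 q.2 := by
  unfold Pca
  fun_prop

/-- The sum of the moduli `‖σ_{d-j}(c)‖`, `2 ≤ j ≤ d - 1`; it bounds the terms of `P_{c,a}` of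
intermediate degree. -/
noncomputable def coeffNorm (d : ℕ) (c : Fin (d - 2) → ℂ) : ℝ :=
  ∑ j ∈ Finset.Icc 2 (d - 1), ‖sigmaE c (d - j)‖

/-- A radius outside which `P_{c,a}` at least doubles the modulus. -/
noncomputable def escapeRadius (d : ℕ) (c : Fin (d - 2) → ℂ) (a : ℂ) : ℝ :=
  d * (coeffNorm d c + ‖a‖ + 2)

/-- A bound on `‖a‖` beyond which `P_{c,a}` maps `z` outside the escape radius. -/
noncomputable def escapeThreshold (d : ℕ) (c : Fin (d - 2) → ℂ) (z : ℂ) : ℝ :=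
  ‖Pca d c 0 z‖ + escapeRadius d c 0 + d + 1

variable {d : ℕ}

lemma coeffNorm_nonneg (c : Fin (d - 2) → ℂ) : 0 ≤ coeffNorm d c :=
  Finset.sum_nonneg fun _ _ => norm_nonneg _

lemma escapeRadius_nonneg (c : Fin (d - 2) → ℂ) (a : ℂ) : 0 ≤ escapeRadius d c a := by
  have := coeffNorm_nonneg c
  unfold escapeRadius
  positivity

lemma continuous_escapeRadius :
    Continuous fun p : (Fin (d - 2) → ℂ) × ℂ => escapeRadius d p.1 p.2 := by
  unfold escapeRadius coeffNorm
  fun_prop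

lemma continuous_escapeThreshold :
    Continuous fun p : (Fin (d - 2) → ℂ) × ℂ => escapeThreshold d p.1 p.2 := by
  have h_poly : Continuous fun p : (Fin (d - 2) → ℂ) × ℂ => Pca d p.1 0 p.2 :=
    (continuous_Pca d).comp
      ((continuous_fst.prodMk continuous_const).prodMk continuous_snd)
  have h_radius : Continuous fun p : (Fin (d - 2) → ℂ) × ℂ => escapeRadius d p.1 0 :=
    continuous_escapeRadius.comp (continuous_fst.prodMk continuous_const)
  unfold escapeThreshold
  fun_prop

lemma norm_Pca_sub_le (c : Fin (d - 2) → ℂ) (a : ℂ) {z : ℂ} (hz : 1 ≤ ‖z‖) :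
    ‖Pca d c a z - (z ^ d / d + a ^ d)‖ ≤ coeffNorm d c * ‖z‖ ^ (d - 1) := by
  have h_sum : Pca d c a z - (z ^ d / d + a ^ d) =
      ∑ j ∈ Finset.Icc 2 (d - 1), (-1 : ℂ) ^ (d - j) * sigmaE c (d - j) * z ^ j / (j : ℂ) := by
    unfold Pca
    ring
  rw [h_sum, coeffNorm, Finset.sum_mul]
  refine norm_sum_le_of_le _ fun j hj => ?_
  obtain ⟨hj_two, hj_le⟩ := Finset.mem_Icc.1 hj
  have hj_one : (1 : ℝ) ≤ j := by exact_mod_cast one_le_two.trans hj_two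
  calc ‖(-1 : ℂ) ^ (d - j) * sigmaE c (d - j) * z ^ j / (j : ℂ)‖
      = ‖sigmaE c (d - j)‖ * ‖z‖ ^ j / j := by simp
    _ ≤ ‖sigmaE c (d - j)‖ * ‖z‖ ^ j := div_le_self (by positivity) hj_one
    _ ≤ ‖sigmaE c (d - j)‖ * ‖z‖ ^ (d - 1) := by gcongr

lemma two_mul_norm_le_norm_Pca (hd : 2 ≤ d) (c : Fin (d - 2) → ℂ) (a : ℂ) {z : ℂ}
    (hz : escapeRadius d c a ≤ ‖z‖) : 2 * ‖z‖ ≤ ‖Pca d c a z‖ := by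
  have hB := coeffNorm_nonneg c
  have ha := norm_nonneg a
  have hd_two : (2 : ℝ) ≤ d := by exact_mod_cast hd
  have hd_pos : (0 : ℝ) < d := by linarith
  have h_div : coeffNorm d c + ‖a‖ + 2 ≤ ‖z‖ / d :=
    (le_div_iff₀' hd_pos).2 hz
  have h_div_le : ‖z‖ / d ≤ ‖z‖ := div_le_self (norm_nonneg z) (by linarith)
  have hz_one : 1 ≤ ‖z‖ := by linarith
  have h_lead : ‖z ^ d / (d : ℂ)‖ = ‖z‖ / d * ‖z‖ ^ (d - 1) := by
    rw [norm_div, norm_pow, Complex.norm_natCast, ← pow_sub_one_mul (by omega : d ≠ 0) ‖z‖]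
    ring
  have h_const : ‖a ^ d‖ ≤ ‖a‖ * ‖z‖ ^ (d - 1) := by
    rw [norm_pow, ← mul_pow_sub_one (by omega : d ≠ 0) ‖a‖]
    gcongr
    linarith
  calc 2 * ‖z‖ ≤ 2 * ‖z‖ ^ (d - 1) := by gcongr; exact le_self_pow₀ hz_one (by omega)
    _ ≤ (‖z‖ / d - ‖a‖ - coeffNorm d c) * ‖z‖ ^ (d - 1) := by gcongr; linarith
    _ ≤ ‖z ^ d / (d : ℂ)‖ - ‖a ^ d‖ - ‖Pca d c a z - (z ^ d / d + a ^ d)‖ := by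
      linarith [norm_Pca_sub_le (d := d) c a hz_one]
    _ ≤ ‖Pca d c a z‖ := by
      have h_reverse := norm_sub_norm_le (z ^ d / (d : ℂ) + a ^ d) (z ^ d / d + a ^ d - Pca d c a z)
      rw [sub_sub_cancel, norm_sub_rev (z ^ d / (d : ℂ) + a ^ d)] at h_reverse
      linarith [norm_sub_le_norm_add (z ^ d / (d : ℂ)) (a ^ d)]

lemma boundedOrbit_iff (hd : 2 ≤ d) (c : Fin (d - 2) → ℂ) (a z : ℂ) :
    boundedOrbit d c a z ↔ ∀ n, ‖(Pca d c a)^[n] z‖ ≤ escapeRadius d c a :=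
  isBounded_range_iterate_iff one_lt_two (escapeRadius_nonneg c a)
    (fun _ => two_mul_norm_le_norm_Pca hd c a) z

lemma escapeRadius_lt_norm_Pca (hd : 2 ≤ d) (c : Fin (d - 2) → ℂ) {a z : ℂ}
    (ha : escapeThreshold d c z < ‖a‖) : escapeRadius d c a < ‖Pca d c a z‖ := by
  have h_radius : escapeRadius d c a = escapeRadius d c 0 + d * ‖a‖ := by
    simp only [escapeRadius, norm_zero]
    ring
  have h_poly : Pca d c a z = a ^ d + Pca d c 0 z := by
    simp only [Pca, zero_pow (by omega : d ≠ 0)]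
    ring
  have hR := escapeRadius_nonneg c 0
  have h_one : 1 ≤ ‖a‖ := by
    refine le_trans ?_ ha.le
    unfold escapeThreshold
    linarith [norm_nonneg (Pca d c 0 z), d.cast_nonneg (α := ℝ)]
  rw [h_radius, h_poly]
  calc escapeRadius d c 0 + d * ‖a‖
      < (escapeThreshold d c z - d) * 1 + d * ‖a‖ - ‖Pca d c 0 z‖ := by
        unfold escapeThreshold; linarith
    _ ≤ (escapeThreshold d c z - d) * ‖a‖ + d * ‖a‖ - ‖Pca d c 0 z‖ := by
        have : 0 ≤ escapeThreshold d c z - d := by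
          unfold escapeThreshold; linarith [norm_nonneg (Pca d c 0 z)]
        gcongr
    _ = escapeThreshold d c z * ‖a‖ - ‖Pca d c 0 z‖ := by ring
    _ ≤ ‖a‖ ^ 2 - ‖Pca d c 0 z‖ := by rw [sq]; gcongr
    _ ≤ ‖a ^ d‖ - ‖Pca d c 0 z‖ := by rw [norm_pow]; gcongr
    _ ≤ ‖a ^ d + Pca d c 0 z‖ := norm_sub_le_norm_add _ _

lemma not_boundedOrbit_of_escapeThreshold_lt (hd : 2 ≤ d) (c : Fin (d - 2) → ℂ) {a z : ℂ}
    (ha : escapeThreshold d c z < ‖a‖) : ¬ boundedOrbit d c a z := fun h =>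
  (escapeRadius_lt_norm_Pca hd c ha).not_ge ((boundedOrbit_iff hd c a z).1 h 1)

lemma not_isBounded_connectedComponentIn_setOf_not_boundedOrbit (hd : 2 ≤ d)
    (c : Fin (d - 2) → ℂ) {a z : ℂ} (ha : ¬ boundedOrbit d c a z) :
    ¬ IsBounded (connectedComponentIn {a | ¬ boundedOrbit d c a z} a) := by
  have h_diff : Differentiable ℂ (Function.uncurry (Pca d c)) := by
    unfold Function.uncurry Pca
    fun_prop
  exact not_isBounded_connectedComponentIn_unboundedLocus
    (differentiable_iterate_apply h_diff (differentiable_const z))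
    (continuous_escapeRadius.comp (Continuous.prodMk_right c))
    (fun a => boundedOrbit_iff hd c a z) ha

end Family

theorem stmt1_general {d : ℕ} (hd : 2 ≤ d) {z : (Fin (d - 2) → ℂ) → ℂ} (hz : Continuous z) :
    IsOpen {p : (Fin (d - 2) → ℂ) × ℂ | ¬ boundedOrbit d p.1 p.2 (z p.1)} ∧
      IsConnected {p : (Fin (d - 2) → ℂ) × ℂ | ¬ boundedOrbit d p.1 p.2 (z p.1)} := by
  constructor
  · exact isOpen_unboundedLocus
      (continuous_iterate_apply (continuous_Pca d) (hz.comp continuous_fst))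
      continuous_escapeRadius fun p => boundedOrbit_iff hd p.1 p.2 (z p.1)
  · exact isConnected_of_not_isBounded_fiber_components (by simp)
      (continuous_escapeThreshold.comp (continuous_id.prodMk hz))
      (fun c _ => not_boundedOrbit_of_escapeThreshold_lt hd c)
      (fun c _ => not_isBounded_connectedComponentIn_setOf_not_boundedOrbit hd c)

/-- The escape locus of the critical point `c_j` is open and connected. -/
theorem stmt1 (d : ℕ) (hd : 3 ≤ d) (j : Fin (d - 1)) :
    IsOpen {p : (Fin (d - 2) → ℂ) × ℂ | ¬ boundedOrbit d p.1 p.2 (critPt p.1 j)} ∧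
      IsConnected {p : (Fin (d - 2) → ℂ) × ℂ | ¬ boundedOrbit d p.1 p.2 (critPt p.1 j)} :=
  stmt1_general (by omega) (continuous_critPt j)
end

section
/- Let d ≥ 3 and let (c,a) ∈ ℂ^{d−1} be a parameter with G(c,a) > 0. Set U₁ := {z ∈ ℂ : g_{c,a}(z) < G(c,a)} and let q := #{i ∈ {0,…,d−2} : g_{c,a}(c_i) < G(c,a)} be the number of critical points of P_{c,a} lying in U₁, counted with multiplicity (the critical points c_0 = 0, c_1, …, c_{d−2} are listed with repetition according to multiplicity). Then U₁ has exactly d − q connected components. -/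
open Filter Topology MeasureTheory

/-!
Critical points are counted with multiplicity. For a polynomial `Q` of degree `D`, the number of
components plus the number of critical points of the lemniscate `{|Q| < r}` is equal to `D` for
every `r > 0`. It is at least `D` for small `r`, where the roots lie in different components, and
at most `D` for large `r`, where the lemniscate is connected; and it is nondecreasing in `r`,
because components merge only at critical points `p` with `|Q p| = r`, where at most `k + 1` of them
meet if `p` has multiplicity `k`: near `p` one has `Q = Q p * (1 - w ^ (k + 1))` for a local
coordinate `w`.

Let `g` be the Green function of a polynomial `P` of degree `d` such that `g < d * r` at the
critical points. Since `g` is a uniform limit of functions whose sublevel sets are lemniscates of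
iterates of `P`, the set `{g < r}` is exhausted by such lemniscates. As `g ∘ P = d * g`, the
critical points of an iterate outside such a lemniscate are the critical points of `P` with
`r ≤ g`, so that all these lemniscates have the same number of components. Each of these components
contains a root of the iterate, where `g` is as small as we please, so the inclusions between
these lemniscates are surjective on components, hence bijective.
-/

open Polynomial

section Counting

theorem card_le_card_add_sum {α β ι : Type*} [Finite α] [Finite β] (φ : α → β) (I : Finset ι)
    (E : ι → Set α) (k : ι → ℕ) (hE : ∀ i ∈ I, (E i).ncard ≤ k i + 1)
    (hφ : ∀ T : Set α, (∀ i ∈ I, E i ⊆ T ∨ E i ⊆ Tᶜ) → ∀ x y, φ x = φ y → x ∈ T → y ∈ T) :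
    Nat.card α ≤ Nat.card β + ∑ i ∈ I, k i := by
  classical
  rcases isEmpty_or_nonempty α with hα | hα
  · simp
  have := Fintype.ofFinite α
  have := Fintype.ofFinite β
  have hbase : ∀ i, ∃ b, (E i).Nonempty → b ∈ E i := fun i => by
    rcases (E i).eq_empty_or_nonempty with h | ⟨b, hb⟩
    exacts [⟨hα.some, by simp [h]⟩, ⟨b, fun _ => hb⟩]
  choose b hb using hbase
  -- The kernel of `L` consists of the functions that are constant on every `E i`.
  let L : (α → ℚ) →ₗ[ℚ] (Σ i : I, ↥(E i \ {b i})) → ℚ :=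
    LinearMap.pi fun e =>
      (LinearMap.proj (e.2 : α) : (α → ℚ) →ₗ[ℚ] ℚ) - LinearMap.proj (b e.1)
  have hrank : Module.finrank ℚ L.range ≤ ∑ i ∈ I, k i := by
    refine (Submodule.finrank_le _).trans ?_
    rw [Module.finrank_fintype_fun_eq_card, Fintype.card_sigma, ← Finset.sum_coe_sort I]
    refine Finset.sum_le_sum fun i _ => ?_
    rw [← Nat.card_eq_fintype_card, Nat.card_coe_set_eq]
    rcases (E i).eq_empty_or_nonempty with h | h
    · simp [h]
    · have := Set.ncard_sdiff_singleton_add_one (hb i h)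
      have := hE i i.2
      omega
  have hker : L.ker ≤ (LinearMap.funLeft ℚ ℚ φ).range := fun v hv => by
    have hconst : ∀ i ∈ I, ∀ x ∈ E i, v x = v (b i) := fun i hi x hx => by
      by_cases hxb : x = b i
      · rw [hxb]
      · exact sub_eq_zero.1 (congrFun (LinearMap.mem_ker.1 hv) ⟨⟨i, hi⟩, ⟨x, hx, hxb⟩⟩)
    have hfactor : v.FactorsThrough φ := fun x y hxy => by
      refine (hφ {z | v z = v x} (fun i hi => ?_) x y hxy rfl).symm
      by_cases h : v (b i) = v x
      · exact .inl fun z hz => (hconst i hi z hz).trans h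
      · exact .inr fun z hz hzx => h ((hconst i hi z hz).symm.trans hzx)
    exact ⟨Function.extend φ v 0, funext fun x => hfactor.extend_apply 0 x⟩
  have hcard := L.finrank_range_add_finrank_ker
  have hβ := (Submodule.finrank_mono hker).trans (LinearMap.funLeft ℚ ℚ φ).finrank_range_le
  rw [Module.finrank_fintype_fun_eq_card, ← Nat.card_eq_fintype_card] at hcard hβ
  omega

end Counting

section Topology

variable {X : Type*} [TopologicalSpace X]

theorem connectedComponents_coe_eq_coe_iff_joinedIn [LocallyPathConnectedSpace X] {U : Set X}
    (hU : IsOpen U) {x y : U} : (x : ConnectedComponents U) = y ↔ JoinedIn U x y := by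
  have := hU.locallyPathConnectedSpace
  rw [eq_comm, ConnectedComponents.coe_eq_coe', ← pathComponent_eq_connectedComponent,
    joinedIn_iff_joined x.2 y.2]
  rfl

theorem eventually_joinedIn_sublevel {f : X → ℝ} (hf : Continuous f) {r : ℝ} {x y : X}
    (h : JoinedIn {z | f z < r} x y) : ∀ᶠ s in 𝓝[<] r, JoinedIn {z | f z < s} x y := by
  obtain ⟨γ, hγ⟩ := h
  obtain ⟨_, ⟨t, rfl⟩, ht⟩ := (isCompact_range γ.continuous).exists_isMaxOn
    (Set.range_nonempty γ) hf.continuousOn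
  filter_upwards [Ioo_mem_nhdsLT (hγ t)] with s hs
  exact ⟨γ, fun u => (ht ⟨u, rfl⟩).trans_lt hs.1⟩

/-- The map on connected components induced by an inclusion of subsets of a topological space. -/
def componentsMap {U V : Set X} (h : U ⊆ V) : ConnectedComponents U → ConnectedComponents V :=
  (continuous_inclusion h).connectedComponentsMap

theorem mem_of_connectedComponents_eq {U O₁ O₂ : Set X} (h₁ : IsOpen O₁) (h₂ : IsOpen O₂)
    (hd : Disjoint O₁ O₂) (hU : U ⊆ O₁ ∪ O₂) {x y : U} (hxy : (x : ConnectedComponents U) = y)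
    (hx : (x : X) ∈ O₁) : (y : X) ∈ O₁ := by
  have hpre : IsPreconnected (Subtype.val '' connectedComponent y : Set X) :=
    isPreconnected_connectedComponent.image _ continuous_subtype_val.continuousOn
  refine hpre.subset_left_of_subset_union h₁ h₂ hd ?_
    ⟨_, Set.mem_image_of_mem _ (ConnectedComponents.coe_eq_coe'.1 hxy), hx⟩
    (Set.mem_image_of_mem _ mem_connectedComponent)
  rintro _ ⟨z, -, rfl⟩
  exact hU z.2

theorem eventually_sublevel_subset {f : X → ℝ} (hf : Continuous f)
    (hcomp : ∀ s, IsCompact {z | f z ≤ s}) {r : ℝ} {O : Set X} (hO : IsOpen O)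
    (hr : {z | f z ≤ r} ⊆ O) : ∀ᶠ s in 𝓝[>] r, {z | f z < s} ⊆ O := by
  rcases ({z | f z ≤ r + 1} \ O).eq_empty_or_nonempty with hK | hK
  · filter_upwards [Ioo_mem_nhdsGT (lt_add_one r)] with s hs z hz
    exact Set.sdiff_eq_empty.1 hK (hz.trans hs.2).le
  · obtain ⟨p, hp, hmin⟩ := ((hcomp _).diff hO).exists_isMinOn hK hf.continuousOn
    have hpr : r < f p := not_le.1 fun h => hp.2 (hr h)
    filter_upwards [Ioo_mem_nhdsGT (lt_min (lt_add_one r) hpr)] with s hs z hz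
    by_contra hzO
    have hz₁ : f z < min (r + 1) (f p) := hz.trans hs.2
    exact (hz₁.trans_le (min_le_right _ _)).not_ge
      (hmin ⟨(hz₁.trans_le (min_le_left _ _)).le, hzO⟩)

theorem eventually_connectedComponents_sublevel_ne [NormalSpace X] {f : X → ℝ} (hf : Continuous f)
    (hcomp : ∀ s, IsCompact {z | f z ≤ s}) {r : ℝ} {C₁ C₂ : Set X} (h₁ : IsClosed C₁)
    (h₂ : IsClosed C₂) (hd : Disjoint C₁ C₂) (hr : {z | f z ≤ r} ⊆ C₁ ∪ C₂) :
    ∀ᶠ s in 𝓝[>] r, ∀ x y : {z | f z < s}, (x : X) ∈ C₁ → (y : X) ∈ C₂ →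
      (x : ConnectedComponents {z | f z < s}) ≠ y := by
  obtain ⟨O₁, O₂, hO₁, hO₂, hC₁, hC₂, hO⟩ := normal_separation h₁ h₂ hd
  filter_upwards [eventually_sublevel_subset hf hcomp (hO₁.union hO₂)
    (hr.trans (Set.union_subset_union hC₁ hC₂))] with s hs x y hx hy hxy
  exact hO.notMem_of_mem_left (mem_of_connectedComponents_eq hO₁ hO₂ hO hs hxy (hC₁ hx)) (hC₂ hy)

/-- The union, as a subset of the ambient space, of a set of connected components of `U`. -/
def componentsUnion {U : Set X} (T : Set (ConnectedComponents U)) : Set X :=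
  Subtype.val '' (ConnectedComponents.mk ⁻¹' T)

/-- The connected components of `U` whose closure in the ambient space contains `p`. They are the
components that merge at `p` when `U` is enlarged to a neighbourhood of `p`. -/
def adherentComponents (U : Set X) (p : X) : Set (ConnectedComponents U) :=
  {C | p ∈ closure (componentsUnion {C})}

theorem coe_mem_componentsUnion {U : Set X} {T : Set (ConnectedComponents U)} {x : U} :
    (x : X) ∈ componentsUnion T ↔ (x : ConnectedComponents U) ∈ T := by
  simp [componentsUnion]

theorem componentsUnion_union_compl {U : Set X} (T : Set (ConnectedComponents U)) :
    componentsUnion T ∪ componentsUnion Tᶜ = U := by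
  rw [componentsUnion, componentsUnion, ← Set.image_union, ← Set.preimage_union,
    Set.union_compl_self, Set.preimage_univ, Set.image_univ, Subtype.range_val]

theorem exists_mem_adherentComponents {U : Set X} [Finite (ConnectedComponents U)]
    {T : Set (ConnectedComponents U)} {p : X} (hp : p ∈ closure (componentsUnion T)) :
    ∃ C ∈ T, C ∈ adherentComponents U p := by
  have hT : componentsUnion T = ⋃ C ∈ T, componentsUnion {C} := by
    rw [componentsUnion, ← Set.biUnion_of_singleton T, Set.preimage_iUnion₂, Set.image_iUnion₂]
    simp only [Set.biUnion_of_singleton]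
    rfl
  rw [hT, T.toFinite.closure_biUnion] at hp
  simpa [adherentComponents] using hp

theorem disjoint_closure_componentsUnion_compl {U : Set X} [Finite (ConnectedComponents U)]
    {T : Set (ConnectedComponents U)}
    (hT : ∀ p, adherentComponents U p ⊆ T ∨ adherentComponents U p ⊆ Tᶜ) :
    Disjoint (closure (componentsUnion T)) (closure (componentsUnion Tᶜ)) := by
  refine Set.disjoint_left.2 fun p hp hp' => ?_
  obtain ⟨C, hC, hCp⟩ := exists_mem_adherentComponents hp
  obtain ⟨D, hD, hDp⟩ := exists_mem_adherentComponents hp'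
  rcases hT p with h | h
  exacts [hD (h hDp), h hCp hC]

theorem adherentComponents_subset_singleton [LocallyConnectedSpace X] {U : Set X} (hU : IsOpen U)
    (p : U) : adherentComponents U p ⊆ {(p : ConnectedComponents U)} := by
  intro C hC
  have := hU.locallyConnectedSpace
  have hopen : IsOpen (Subtype.val '' connectedComponent p) :=
    hU.isOpenMap_subtype_val _ isOpen_connectedComponent
  obtain ⟨_, ⟨x, hx, rfl⟩, y, hy, hyx⟩ :=
    mem_closure_iff.1 hC _ hopen ⟨p, mem_connectedComponent, rfl⟩
  rw [← Subtype.val_injective hyx] at hx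
  exact (hy : (y : ConnectedComponents U) = C).symm.trans (ConnectedComponents.coe_eq_coe'.2 hx)

theorem card_connectedComponents_sublevel_of_exhaustion [LocallyPathConnectedSpace X] {f : X → ℝ}
    (hf : Continuous f) {m r : ℝ} (hmr : m < r) {N : ℕ} (hN : N ≠ 0)
    (hexh : ∀ s, m ≤ s → s < r → ∃ W : Set X, IsOpen W ∧ {z | f z ≤ s} ⊆ W ∧
      (∃ s' < r, W ⊆ {z | f z ≤ s'}) ∧ Nat.card (ConnectedComponents W) = N ∧
      ∀ x : W, ∃ z : W, f z ≤ m ∧ (z : ConnectedComponents W) = x) :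
    Nat.card (ConnectedComponents {z | f z < r}) = N := by
  obtain ⟨W₀, -, hmW₀, ⟨s₀, hs₀, hW₀⟩, hcard₀, -⟩ := hexh m le_rfl hmr
  have hW₀r : W₀ ⊆ {z | f z < r} := fun z hz => (hW₀ hz).trans_lt hs₀
  have hsurj : Function.Surjective (componentsMap hW₀r) := fun C => by
    obtain ⟨x, rfl⟩ := ConnectedComponents.surjective_coe C
    obtain ⟨W, -, hsW, ⟨s', hs', hW⟩, -, hroot⟩ :=
      hexh (max m (f x)) (le_max_left _ _) (max_lt hmr x.2)
    obtain ⟨z, hz, hzx⟩ := hroot ⟨x, hsW (le_max_right m (f x))⟩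
    have hWr : W ⊆ {z | f z < r} := fun z hz => (hW hz).trans_lt hs'
    exact ⟨((⟨z, hmW₀ hz⟩ : W₀) : ConnectedComponents W₀), congrArg (componentsMap hWr) hzx⟩
  have hinj : Function.Injective (componentsMap hW₀r) := fun C D hCD => by
    obtain ⟨x, rfl⟩ := ConnectedComponents.surjective_coe C
    obtain ⟨y, rfl⟩ := ConnectedComponents.surjective_coe D
    have hjoin :=
      (connectedComponents_coe_eq_coe_iff_joinedIn (isOpen_lt hf continuous_const)).1 hCD
    obtain ⟨s, hs, hms⟩ := ((eventually_joinedIn_sublevel hf hjoin).and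
      (Ioo_mem_nhdsLT (max_lt hmr hs₀))).exists
    obtain ⟨W, hWo, hsW, -, hcard, hroot⟩ := hexh s ((le_max_left _ _).trans hms.1.le) hms.2
    have hW₀W : W₀ ⊆ W := fun z hz =>
      hsW ((hW₀ hz).trans ((le_max_right m s₀).trans hms.1.le))
    have hsurj' : Function.Surjective (componentsMap hW₀W) := fun C => by
      obtain ⟨x, rfl⟩ := ConnectedComponents.surjective_coe C
      obtain ⟨z, hz, hzx⟩ := hroot x
      exact ⟨((⟨z, hmW₀ hz⟩ : W₀) : ConnectedComponents W₀), hzx⟩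
    have : Finite (ConnectedComponents W₀) := Nat.finite_of_card_ne_zero (hcard₀ ▸ hN)
    refine (hsurj'.bijective_of_nat_card_le (by rw [hcard, hcard₀])).injective ?_
    exact (connectedComponents_coe_eq_coe_iff_joinedIn hWo).2
      (hs.mono fun z hz => hsW (show f z ≤ s from le_of_lt hz))
  rw [← hcard₀, Nat.card_congr (Equiv.ofBijective _ ⟨hinj, hsurj⟩)]

end Topology

theorem le_of_eventually_nhdsLT_le_of_eventually_nhdsGT_le {β : Type*} [Preorder β] {f : ℝ → β}
    {a b : ℝ} (hab : a ≤ b) (hleft : ∀ t ∈ Set.Ioc a b, ∀ᶠ s in 𝓝[<] t, f s ≤ f t)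
    (hright : ∀ t ∈ Set.Ico a b, ∀ᶠ s in 𝓝[>] t, f t ≤ f s) : f a ≤ f b := by
  by_contra hb
  set T := {t | t ∈ Set.Icc a b ∧ ¬ f a ≤ f t}
  have hT : BddBelow T := ⟨a, fun t ht => ht.1.1⟩
  have hbT : b ∈ T := ⟨⟨hab, le_rfl⟩, hb⟩
  have hat : a ≤ sInf T := le_csInf ⟨b, hbT⟩ fun t ht => ht.1.1
  have htb : sInf T ≤ b := csInf_le hT hbT
  have hbelow : ∀ s, a ≤ s → s < sInf T → f a ≤ f s := fun s has hst =>
    by_contra fun h => notMem_of_lt_csInf hst hT ⟨⟨has, hst.le.trans htb⟩, h⟩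
  have hinf : f a ≤ f (sInf T) := by
    rcases hat.eq_or_lt with h | h
    · rw [← h]
    · obtain ⟨s, hs, hsT⟩ := ((hleft _ ⟨h, htb⟩).and (Ioo_mem_nhdsLT h)).exists
      exact (hbelow s hsT.1.le hsT.2).trans hs
  have htb' : sInf T < b := htb.lt_of_ne fun h => hb (h ▸ hinf)
  obtain ⟨u, hu, hus⟩ := mem_nhdsGT_iff_exists_Ioo_subset.1 (hright _ ⟨hat, htb'⟩)
  obtain ⟨v, hv, hvu⟩ := exists_lt_of_csInf_lt ⟨b, hbT⟩ hu
  rcases (csInf_le hT hv).eq_or_lt with h | h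
  exacts [hv.2 (h ▸ hinf), hv.2 (hinf.trans (hus ⟨h, hvu⟩))]

section Components

theorem exists_mem_fiber_coe_eq {X Y : Type*} [TopologicalSpace X] [LocallyConnectedSpace X]
    [TopologicalSpace Y] [PreconnectedSpace Y] {f : X → Y} (hopen : IsOpenMap f)
    (hclosed : IsClosedMap f) (x : X) (y : Y) : ∃ z, f z = y ∧ (z : ConnectedComponents X) = x := by
  have hclopen : IsClopen (f '' connectedComponent x) :=
    ⟨hclosed _ isClosed_connectedComponent, hopen _ isOpen_connectedComponent⟩
  have hy : y ∈ f '' connectedComponent x := by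
    rw [hclopen.eq_univ ⟨_, Set.mem_image_of_mem f mem_connectedComponent⟩]
    exact Set.mem_univ y
  obtain ⟨z, hz, rfl⟩ := hy
  exact ⟨z, rfl, ConnectedComponents.coe_eq_coe'.2 hz⟩

variable {Q : ℂ[X]} {V : Set ℂ}

theorem exists_eval_eq_coe_eq (hQ : Q.natDegree ≠ 0) (hV : IsOpen V) (hc : IsPreconnected V)
    (x : Q.eval ⁻¹' V) {y : ℂ} (hy : y ∈ V) :
    ∃ z : Q.eval ⁻¹' V, Q.eval (z : ℂ) = y ∧ (z : ConnectedComponents (Q.eval ⁻¹' V)) = x := by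
  have := Subtype.preconnectedSpace hc
  have := (hV.preimage Q.continuous).locallyConnectedSpace
  obtain ⟨z, hz, hzx⟩ := exists_mem_fiber_coe_eq
    ((Q.isOpenQuotientMap_eval hQ).isOpenMap.restrictPreimage V)
    (Q.isClosedMap_eval.restrictPreimage V) x ⟨y, hy⟩
  exact ⟨z, congrArg Subtype.val hz, hzx⟩

theorem encard_connectedComponents_preimage_eval_le (hQ : Q.natDegree ≠ 0) (hV : IsConnected V) :
    ENat.card (ConnectedComponents (Q.eval ⁻¹' V)) ≤ Q.natDegree := by
  have := isConnected_iff_connectedSpace.1 hV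
  obtain ⟨y, hy⟩ := hV.nonempty
  have hne : Q - C y ≠ 0 := fun h => hQ (by rw [sub_eq_zero.1 h, natDegree_C])
  refine (((Q.isOpenQuotientMap_eval hQ).isOpenMap.restrictPreimage V)
    |>.enatCard_connectedComponents_le_encard_preimage_singleton
      (Q.isClosedMap_eval.restrictPreimage V) ⟨y, hy⟩).trans ?_
  rw [← Subtype.val_injective.encard_image]
  calc _ ≤ ((Q - C y).roots.toFinset : Set ℂ).encard := by
        refine Set.encard_le_encard ?_
        rintro _ ⟨z, hz, rfl⟩
        have hzy : Q.eval (z : ℂ) = y := congrArg Subtype.val hz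
        simp [hne, hzy]
    _ ≤ Q.natDegree := by
        rw [Set.encard_coe_eq_coe_finsetCard, Nat.cast_le]
        exact (Multiset.toFinset_card_le _).trans ((card_roots' _).trans_eq (natDegree_sub_C))

theorem finite_connectedComponents_preimage_eval (hQ : Q.natDegree ≠ 0) (hV : IsConnected V) :
    Finite (ConnectedComponents (Q.eval ⁻¹' V)) :=
  ENat.card_lt_top.1
    ((encard_connectedComponents_preimage_eval_le hQ hV).trans_lt (ENat.natCast_lt_top _))

theorem card_connectedComponents_preimage_pow_le {n : ℕ} (hn : n ≠ 0) (hV : IsConnected V) :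
    Nat.card (ConnectedComponents ((X ^ n : ℂ[X]).eval ⁻¹' V)) ≤ n := by
  have hdeg : (X ^ n : ℂ[X]).natDegree ≠ 0 := by rwa [natDegree_X_pow]
  have := finite_connectedComponents_preimage_eval hdeg hV
  have h := encard_connectedComponents_preimage_eval_le hdeg hV
  rwa [natDegree_X_pow, ← ENat.natCast_toNat (ENat.card_lt_top_of_finite.ne), Nat.cast_le] at h

end Components

section LocalForm

theorem exists_openPartialHomeomorph_pow_eq {h : ℂ → ℂ} {p : ℂ} (hh : AnalyticAt ℂ h p)
    (hp : h p ≠ 0) {n : ℕ} (hn : n ≠ 0) : ∃ e : OpenPartialHomeomorph ℂ ℂ,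
      p ∈ e.source ∧ e p = 0 ∧ ∀ z, e z ^ n = (z - p) ^ n * h z := by
  obtain ⟨α, hα⟩ := IsAlgClosed.exists_pow_nat_eq (h p) (Nat.pos_of_ne_zero hn)
  have hα₀ : α ≠ 0 := by
    rintro rfl
    exact hp (by rw [← hα, zero_pow hn])
  -- The quotient `h z / h p` is close to `1`, hence in the domain of the principal `n`-th root.
  let u : ℂ → ℂ := fun z => α * (h z / h p) ^ (n : ℂ)⁻¹
  have hu : AnalyticAt ℂ u p := analyticAt_const.mul
    ((hh.div analyticAt_const hp).cpow analyticAt_const (by simp [hp]))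
  let ψ : ℂ → ℂ := fun z => (z - p) * u z
  have hψ : HasStrictDerivAt ψ α p := by
    have hid : HasStrictDerivAt (fun z : ℂ => z - p) 1 p := (hasStrictDerivAt_id p).sub_const p
    have hmul : HasStrictDerivAt ψ _ p := hid.mul hu.hasStrictDerivAt
    simpa [u, hp] using hmul
  refine ⟨(hψ.hasStrictFDerivAt_equiv hα₀).toOpenPartialHomeomorph ψ,
    HasStrictFDerivAt.mem_toOpenPartialHomeomorph_source _, ?_, fun z => ?_⟩
  · simp [ψ]
  · change ((z - p) * u z) ^ n = _
    simp only [u, mul_pow, hα, Complex.cpow_nat_inv_pow _ hn]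
    field_simp

theorem ncard_adherentComponents_le {U V : Set ℂ} {p : ℂ} {n : ℕ} (hn : n ≠ 0)
    (e : OpenPartialHomeomorph ℂ ℂ) (hp : p ∈ e.source) (hp₀ : e p = 0)
    (hV : ∀ ε > 0, IsConnected (Metric.ball 0 ε ∩ V))
    (hU : ∀ z ∈ e.source, z ∈ U ↔ e z ^ n ∈ V) : (adherentComponents U p).ncard ≤ n := by
  obtain ⟨δ, hδ, hball⟩ := Metric.isOpen_iff.1 e.open_target 0 (hp₀ ▸ e.map_source hp)
  have hc := hV (δ ^ n) (pow_pos hδ n)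
  set S : Set ℂ := (X ^ n : ℂ[X]).eval ⁻¹' (Metric.ball 0 (δ ^ n) ∩ V)
  have hmem : ∀ w, w ∈ S ↔ w ∈ Metric.ball 0 δ ∧ w ^ n ∈ V := fun w => by
    simp only [S, Set.mem_preimage, eval_pow, eval_X, Set.mem_inter_iff, mem_ball_zero_iff,
      norm_pow, pow_lt_pow_iff_left₀ (norm_nonneg w) hδ.le hn]
  have hSt : S ⊆ e.target := fun w hw => hball ((hmem w).1 hw).1
  have hSU : Set.MapsTo e.symm S U := fun w hw =>
    (hU _ (e.map_target (hSt hw))).2 (by rw [e.right_inv (hSt hw)]; exact ((hmem w).1 hw).2)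
  have hcont : Continuous (hSU.restrict e.symm S U) :=
    (e.continuousOn_symm.mono hSt).mapsToRestrict hSU
  have hdeg : (X ^ n : ℂ[X]).natDegree ≠ 0 := by rwa [natDegree_X_pow]
  have := finite_connectedComponents_preimage_eval hdeg hc
  have hsub : adherentComponents U p ⊆ Set.range hcont.connectedComponentsMap := fun C hC => by
    have hnhds : e.source ∩ e ⁻¹' Metric.ball 0 δ ∈ 𝓝 p :=
      (e.isOpen_inter_preimage Metric.isOpen_ball).mem_nhds ⟨hp, by simpa [hp₀] using hδ⟩
    obtain ⟨_, ⟨hxs, hxδ⟩, x, rfl, rfl⟩ := mem_closure_iff_nhds.1 hC _ hnhds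
    have hxS : e x ∈ S := (hmem _).2 ⟨hxδ, (hU _ hxs).1 x.2⟩
    refine ⟨((⟨e x, hxS⟩ : S) : ConnectedComponents S), congrArg ConnectedComponents.mk ?_⟩
    exact Subtype.ext (e.left_inv hxs)
  calc (adherentComponents U p).ncard ≤ (Set.range hcont.connectedComponentsMap).ncard :=
        Set.ncard_le_ncard hsub (Set.finite_range _)
    _ ≤ Nat.card (ConnectedComponents S) := Finite.card_range_le _
    _ ≤ n := card_connectedComponents_preimage_pow_le hn hc

theorem isConnected_ball_inter_ball_one {ε : ℝ} (hε : 0 < ε) :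
    IsConnected (Metric.ball (0 : ℂ) ε ∩ Metric.ball 1 1) := by
  refine ((convex_ball _ _).inter (convex_ball _ _)).isConnected ?_
  obtain ⟨x, hx₀, hx⟩ := exists_between (lt_min hε one_pos)
  have hx₁ := lt_min_iff.1 hx
  refine ⟨(x : ℂ), ?_, ?_⟩
  · rw [mem_ball_zero_iff, Complex.norm_of_nonneg hx₀.le]
    exact hx₁.1
  · rw [Metric.mem_ball, ← Complex.ofReal_one, Complex.isometry_ofReal.dist_eq, Real.dist_eq,
      abs_lt]
    constructor <;> linarith

end LocalForm

section Lemniscate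

/-- The open lemniscate `{|Q| < r}` of the polynomial `Q`. -/
def openLemniscate (Q : ℂ[X]) (r : ℝ) : Set ℂ := {z | ‖Q.eval z‖ < r}

open Classical in
/-- The number of critical points of the polynomial `Q` in `S`, counted with multiplicity. -/
noncomputable def critCount (Q : ℂ[X]) (S : Set ℂ) : ℕ := Q.derivative.roots.countP (· ∈ S)

variable {Q : ℂ[X]}

open Classical in
theorem critCount_eq_sum (Q : ℂ[X]) (S : Set ℂ) :
    critCount Q S = ∑ p ∈ Q.derivative.roots.toFinset with p ∈ S, Q.derivative.roots.count p := by
  rw [critCount, Multiset.countP_eq_card_filter, ← Multiset.toFinset_sum_count_eq,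
    Multiset.toFinset_filter]
  refine Finset.sum_congr (by ext; simp) fun p hp => ?_
  exact Multiset.count_filter_of_pos (Finset.mem_filter.1 hp).2

theorem critCount_congr {S T : Set ℂ} (h : ∀ p ∈ Q.derivative.roots, p ∈ S ↔ p ∈ T) :
    critCount Q S = critCount Q T := by
  classical
  exact Multiset.countP_congr rfl fun p hp => propext (h p hp)

theorem critCount_union {S T : Set ℂ} (h : Disjoint S T) :
    critCount Q (S ∪ T) = critCount Q S + critCount Q T := by
  classical
  simp only [critCount_eq_sum]
  rw [← Finset.sum_union]
  · congr 1
    ext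
    simp only [Finset.mem_filter, Finset.mem_union, Set.mem_union]
    tauto
  · exact Finset.disjoint_filter.2 fun p _ hp => h.notMem_of_mem_left hp

theorem critCount_mono {S T : Set ℂ} (h : S ⊆ T) : critCount Q S ≤ critCount Q T := by
  rw [← Set.union_sdiff_cancel h, critCount_union Set.disjoint_sdiff_right]
  exact Nat.le_add_right _ _

theorem critCount_add_critCount_compl (hQ : 0 < Q.natDegree) (S : Set ℂ) :
    critCount Q S + critCount Q Sᶜ + 1 = Q.natDegree := by
  have hcard := (IsAlgClosed.splits Q.derivative).natDegree_eq_card_roots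
  rw [natDegree_derivative] at hcard
  rw [← critCount_union disjoint_compl_right, Set.union_compl_self, critCount]
  simp only [Set.mem_univ, Multiset.countP_True, ← hcard, Nat.sub_add_cancel hQ]

theorem isOpen_openLemniscate (Q : ℂ[X]) (r : ℝ) : IsOpen (openLemniscate Q r) :=
  isOpen_lt Q.continuous.norm continuous_const

theorem openLemniscate_mono {r s : ℝ} (h : r ≤ s) : openLemniscate Q r ⊆ openLemniscate Q s :=
  fun _ hz => lt_of_lt_of_le hz h

theorem openLemniscate_eq_preimage_ball (Q : ℂ[X]) (r : ℝ) :
    openLemniscate Q r = Q.eval ⁻¹' Metric.ball 0 r := by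
  ext z
  simp [openLemniscate]

theorem isCompact_setOf_norm_eval_le (hQ : 0 < Q.natDegree) (r : ℝ) :
    IsCompact {z | ‖Q.eval z‖ ≤ r} := by
  have h := (Q.isProperMap_eval (natDegree_pos_iff_degree_pos.1 hQ)).isCompact_preimage
    (isCompact_closedBall (0 : ℂ) r)
  simpa [Set.preimage, mem_closedBall_zero_iff] using h

theorem closure_openLemniscate (hQ : 0 < Q.natDegree) {r : ℝ} (hr : 0 < r) :
    closure (openLemniscate Q r) = {z | ‖Q.eval z‖ ≤ r} := by
  rw [openLemniscate_eq_preimage_ball,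
    ← (Q.isOpenQuotientMap_eval hQ.ne').isOpenMap.preimage_closure_eq_closure_preimage Q.continuous,
    closure_ball _ hr.ne']
  ext z
  simp

theorem finite_connectedComponents_openLemniscate (hQ : 0 < Q.natDegree) {r : ℝ} (hr : 0 < r) :
    Finite (ConnectedComponents (openLemniscate Q r)) := by
  rw [openLemniscate_eq_preimage_ball]
  exact finite_connectedComponents_preimage_eval hQ.ne' (Metric.isConnected_ball hr)

theorem exists_root_coe_eq (hQ : 0 < Q.natDegree) {r : ℝ} :
    ∀ x : openLemniscate Q r, ∃ z : openLemniscate Q r, (z : ℂ) ∈ Q.roots ∧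
      (z : ConnectedComponents (openLemniscate Q r)) = x := by
  rw [openLemniscate_eq_preimage_ball]
  intro x
  obtain ⟨z, hz, hzx⟩ := exists_eval_eq_coe_eq hQ.ne' Metric.isOpen_ball
    (convex_ball (0 : ℂ) r).isPreconnected x (Metric.mem_ball_self (Metric.pos_of_mem_ball x.2))
  exact ⟨z, (mem_roots (ne_zero_of_natDegree_gt hQ)).2 hz, hzx⟩

theorem ncard_adherentComponents_openLemniscate_norm_eval_le (hQ : 0 < Q.natDegree) {p : ℂ}
    (hp : Q.eval p ≠ 0) :
    (adherentComponents (openLemniscate Q ‖Q.eval p‖) p).ncard ≤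
      Q.derivative.roots.count p + 1 := by
  set F := C (Q.eval p) - Q
  have hF : F ≠ 0 := fun h => by
    rw [← sub_eq_zero.1 h, natDegree_C] at hQ
    exact hQ.false
  have hFp : F.IsRoot p := by simp [F]
  have hmult : Q.derivative.roots.count p + 1 = F.rootMultiplicity p := by
    have hderiv : F.derivative = -Q.derivative := by simp [F]
    have h := derivative_rootMultiplicity_of_root hFp
    rw [hderiv, ← count_roots, roots_neg] at h
    rw [h, Nat.sub_add_cancel ((rootMultiplicity_pos hF).2 hFp)]
  obtain ⟨H, hH, hHp⟩ := F.exists_eq_pow_rootMultiplicity_mul_and_not_dvd hF p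
  rw [← hmult] at hH
  set n := Q.derivative.roots.count p + 1
  have hHp' : (H.eval p) / Q.eval p ≠ 0 := div_ne_zero (fun h => hHp (dvd_iff_isRoot.2 h)) hp
  have hH_an : AnalyticAt ℂ (fun z => H.eval z / Q.eval p) p :=
    (H.differentiable.analyticAt p).div analyticAt_const hp
  obtain ⟨e, hpe, hep, he⟩ := exists_openPartialHomeomorph_pow_eq hH_an hHp' (Nat.succ_ne_zero _)
  refine ncard_adherentComponents_le (Nat.succ_ne_zero _) e hpe hep
    (fun ε hε => isConnected_ball_inter_ball_one hε) fun z _ => ?_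
  have hQz : Q.eval z = Q.eval p * (1 - e z ^ n) := by
    have h := congrArg (eval z) hH
    simp only [F, eval_sub, eval_C, eval_mul, eval_pow, eval_X] at h
    rw [he, mul_sub, mul_div_assoc', mul_div_cancel₀ _ hp, ← h]
    ring
  change ‖Q.eval z‖ < ‖Q.eval p‖ ↔ _
  rw [hQz, norm_mul, mul_lt_iff_lt_one_right (norm_pos_iff.2 hp), mem_ball_iff_norm']

theorem ncard_adherentComponents_openLemniscate_le (hQ : 0 < Q.natDegree) {r : ℝ} (hr : 0 < r)
    (p : ℂ) : (adherentComponents (openLemniscate Q r) p).ncard ≤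
      (if ‖Q.eval p‖ = r then Q.derivative.roots.count p else 0) + 1 := by
  split_ifs with hp
  · subst hp
    exact ncard_adherentComponents_openLemniscate_norm_eval_le hQ (norm_pos_iff.1 hr)
  rcases lt_or_gt_of_ne hp with h | h
  · rw [zero_add, ← Set.ncard_singleton]
    exact Set.ncard_le_ncard
      (adherentComponents_subset_singleton (isOpen_openLemniscate Q r) ⟨p, h⟩)
  · have hempty : adherentComponents (openLemniscate Q r) p = ∅ := by
      refine Set.eq_empty_of_forall_notMem fun C hC => h.not_ge ?_
      have : p ∈ closure (openLemniscate Q r) :=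
        closure_mono (Subtype.coe_image_subset _ _) hC
      rwa [closure_openLemniscate hQ hr] at this
    simp [hempty]

/-- The number of components plus the number of critical points of the open lemniscate `{|Q| < r}`,
which turns out not to depend on `r`. -/
noncomputable def lemniscateIndex (Q : ℂ[X]) (r : ℝ) : ℕ :=
  Nat.card (ConnectedComponents (openLemniscate Q r)) + critCount Q (openLemniscate Q r)

theorem eventually_componentsUnion_separated (hQ : 0 < Q.natDegree) {r : ℝ} (hr : 0 < r)
    {T : Set (ConnectedComponents (openLemniscate Q r))}
    (hT : ∀ p ∈ Q.derivative.roots.toFinset, adherentComponents (openLemniscate Q r) p ⊆ T ∨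
      adherentComponents (openLemniscate Q r) p ⊆ Tᶜ) :
    ∀ᶠ s in 𝓝[>] r, ∀ x y : openLemniscate Q s, (x : ℂ) ∈ componentsUnion T →
      (y : ℂ) ∈ componentsUnion Tᶜ → (x : ConnectedComponents (openLemniscate Q s)) ≠ y := by
  have := finite_connectedComponents_openLemniscate hQ hr
  have hT' : ∀ p, adherentComponents (openLemniscate Q r) p ⊆ T ∨
      adherentComponents (openLemniscate Q r) p ⊆ Tᶜ := fun p => by
    by_cases hp : p ∈ Q.derivative.roots
    · exact hT p (Multiset.mem_toFinset.2 hp)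
    have hcard := ncard_adherentComponents_openLemniscate_le hQ hr p
    rw [Multiset.count_eq_zero_of_notMem hp, ite_self, zero_add, Set.ncard_le_one_iff_subsingleton]
      at hcard
    rcases hcard.eq_empty_or_singleton with h | ⟨C, h⟩
    · exact .inl (h ▸ Set.empty_subset T)
    · simpa [h] using em (C ∈ T)
  have hcover : {z | ‖Q.eval z‖ ≤ r} ⊆
      closure (componentsUnion T) ∪ closure (componentsUnion Tᶜ) := by
    rw [← closure_union, componentsUnion_union_compl, closure_openLemniscate hQ hr]
  filter_upwards [eventually_connectedComponents_sublevel_ne Q.continuous.norm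
    (isCompact_setOf_norm_eval_le hQ) isClosed_closure isClosed_closure
    (disjoint_closure_componentsUnion_compl hT') hcover] with s hs x y hx hy
  exact hs x y (subset_closure hx) (subset_closure hy)

theorem eventually_nhdsGT_lemniscateIndex_le (hQ : 0 < Q.natDegree) {r : ℝ} (hr : 0 < r) :
    ∀ᶠ s in 𝓝[>] r, lemniscateIndex Q r ≤ lemniscateIndex Q s := by
  have := finite_connectedComponents_openLemniscate hQ hr
  have hsep := eventually_all.2 fun T : Set (ConnectedComponents (openLemniscate Q r)) =>
    eventually_imp_distrib_left.2 (eventually_componentsUnion_separated hQ hr (T := T))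
  filter_upwards [hsep, self_mem_nhdsWithin] with s hs (hrs : r < s)
  have hsub := openLemniscate_mono (Q := Q) hrs.le
  have := finite_connectedComponents_openLemniscate hQ (hr.trans hrs)
  have hcard := card_le_card_add_sum (componentsMap hsub) Q.derivative.roots.toFinset
    (adherentComponents (openLemniscate Q r)) _
    (fun p _ => ncard_adherentComponents_openLemniscate_le hQ hr p) fun T hT C D hCD hC => by
      obtain ⟨x, rfl⟩ := ConnectedComponents.surjective_coe C
      obtain ⟨y, rfl⟩ := ConnectedComponents.surjective_coe D
      by_contra hy
      exact hs T hT (Set.inclusion hsub x) (Set.inclusion hsub y) (coe_mem_componentsUnion.2 hC)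
        (coe_mem_componentsUnion.2 hy) hCD
  have hcrit : critCount Q (openLemniscate Q r) + critCount Q {z | ‖Q.eval z‖ = r} ≤
      critCount Q (openLemniscate Q s) := by
    rw [← critCount_union (Set.disjoint_left.2 fun z hz hz' => hz.ne hz')]
    exact critCount_mono (Set.union_subset hsub fun z hz => hrs.trans_eq' (Eq.symm hz))
  have hsphere : critCount Q {z | ‖Q.eval z‖ = r} = ∑ p ∈ Q.derivative.roots.toFinset,
      if ‖Q.eval p‖ = r then Q.derivative.roots.count p else 0 := by
    rw [critCount_eq_sum, Finset.sum_filter]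
    exact Finset.sum_congr rfl fun p _ => by congr
  rw [lemniscateIndex, lemniscateIndex]
  omega

theorem eventually_nhdsLT_lemniscateIndex_le (hQ : 0 < Q.natDegree) {r : ℝ} (hr : 0 < r) :
    ∀ᶠ s in 𝓝[<] r, lemniscateIndex Q s ≤ lemniscateIndex Q r := by
  have := finite_connectedComponents_openLemniscate hQ hr
  have hjoin : ∀ᶠ s in 𝓝[<] r, ∀ z ∈ Q.roots.toFinset, ∀ w ∈ Q.roots.toFinset,
      JoinedIn (openLemniscate Q r) z w → JoinedIn (openLemniscate Q s) z w := by
    simp_rw [eventually_all_finset, eventually_imp_distrib_left]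
    exact fun z _ w _ h => eventually_joinedIn_sublevel Q.continuous.norm h
  filter_upwards [hjoin, self_mem_nhdsWithin] with s hs (hsr : s < r)
  have hsub := openLemniscate_mono (Q := Q) hsr.le
  refine Nat.add_le_add (Nat.card_le_card_of_injective (componentsMap hsub) fun C D hCD => ?_)
    (critCount_mono hsub)
  obtain ⟨x, rfl⟩ := ConnectedComponents.surjective_coe C
  obtain ⟨y, rfl⟩ := ConnectedComponents.surjective_coe D
  obtain ⟨z, hz, hzx⟩ := exists_root_coe_eq hQ x
  obtain ⟨w, hw, hwy⟩ := exists_root_coe_eq hQ y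
  rw [← hzx, ← hwy] at hCD ⊢
  rw [connectedComponents_coe_eq_coe_iff_joinedIn (isOpen_openLemniscate Q s)]
  exact hs z (Multiset.mem_toFinset.2 hz) w (Multiset.mem_toFinset.2 hw)
    ((connectedComponents_coe_eq_coe_iff_joinedIn (isOpen_openLemniscate Q r)).1 hCD)

theorem eventually_card_roots_le_card_connectedComponents (hQ : 0 < Q.natDegree) :
    ∀ᶠ r in 𝓝[>] 0,
      Q.roots.toFinset.card ≤ Nat.card (ConnectedComponents (openLemniscate Q r)) := by
  have hsep : ∀ᶠ r in 𝓝[>] 0, ∀ z ∈ Q.roots.toFinset, ∀ x y : openLemniscate Q r,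
      (x : ℂ) ∈ ({z} : Set ℂ) → (y : ℂ) ∈ (Q.roots.toFinset.erase z : Set ℂ) →
      (x : ConnectedComponents (openLemniscate Q r)) ≠ y := by
    rw [eventually_all_finset]
    refine fun z _ => eventually_connectedComponents_sublevel_ne Q.continuous.norm
      (isCompact_setOf_norm_eval_le hQ) isClosed_singleton (Finset.finite_toSet _).isClosed
      (by simp) fun w hw => ?_
    have hw₀ : Q.eval w = 0 := norm_le_zero_iff.1 hw
    simp [ne_zero_of_natDegree_gt hQ, hw₀]
  filter_upwards [hsep, self_mem_nhdsWithin] with r hr (hr₀ : 0 < r)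
  have := finite_connectedComponents_openLemniscate hQ hr₀
  have hmem : ∀ z : Q.roots.toFinset, (z : ℂ) ∈ openLemniscate Q r := fun z => by
    have hz : Q.IsRoot z := isRoot_of_mem_roots (Multiset.mem_toFinset.1 z.2)
    simpa [openLemniscate, hz.eq_zero] using hr₀
  rw [← Fintype.card_coe, ← Nat.card_eq_fintype_card]
  refine Nat.card_le_card_of_injective
    (fun z => ((⟨z, hmem z⟩ : openLemniscate Q r) : ConnectedComponents (openLemniscate Q r)))
    fun z w hzw => ?_
  by_contra hne
  exact hr z z.2 ⟨z, hmem z⟩ ⟨w, hmem w⟩ rfl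
    (Finset.mem_erase.2 ⟨fun h => hne (Subtype.ext h.symm), w.2⟩) hzw

theorem natDegree_le_card_roots_add_critCount {S : Set ℂ} (hS : ∀ z ∈ Q.roots, z ∈ S) :
    Q.natDegree ≤ Q.roots.toFinset.card + critCount Q S := by
  classical
  calc Q.natDegree = ∑ z ∈ Q.roots.toFinset, Q.roots.count z := by
        rw [Multiset.toFinset_sum_count_eq, (IsAlgClosed.splits Q).natDegree_eq_card_roots]
    _ ≤ ∑ z ∈ Q.roots.toFinset, (1 + Q.derivative.roots.count z) := by
        refine Finset.sum_le_sum fun z hz => ?_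
        have hz' : Q.IsRoot z := isRoot_of_mem_roots (Multiset.mem_toFinset.1 hz)
        have h := derivative_rootMultiplicity_of_root hz'
        rw [← count_roots, ← count_roots] at h
        omega
    _ = Q.roots.toFinset.card + ∑ z ∈ Q.roots.toFinset, Q.derivative.roots.count z := by
        rw [Finset.sum_add_distrib, Finset.card_eq_sum_ones]
    _ ≤ Q.roots.toFinset.card + critCount Q S := by
        rw [critCount_eq_sum]
        refine Nat.add_le_add_left (Finset.sum_le_sum_of_ne_zero fun z hz hz' => ?_) _
        rw [Finset.mem_filter, Multiset.mem_toFinset]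
        exact ⟨Multiset.count_ne_zero.1 hz', hS z (Multiset.mem_toFinset.1 hz)⟩

theorem eventually_natDegree_le_lemniscateIndex (hQ : 0 < Q.natDegree) :
    ∀ᶠ r in 𝓝[>] 0, Q.natDegree ≤ lemniscateIndex Q r := by
  filter_upwards [eventually_card_roots_le_card_connectedComponents hQ, self_mem_nhdsWithin]
    with r hr (hr₀ : 0 < r)
  have hroots : ∀ z ∈ Q.roots, z ∈ openLemniscate Q r := fun z hz => by
    simpa [openLemniscate, (isRoot_of_mem_roots hz).eq_zero] using hr₀
  exact (natDegree_le_card_roots_add_critCount hroots).trans (Nat.add_le_add_right hr _)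

theorem eventually_lemniscateIndex_le_natDegree (hQ : 0 < Q.natDegree) :
    ∀ᶠ r in atTop, lemniscateIndex Q r ≤ Q.natDegree := by
  obtain ⟨ρ, hρ⟩ := (Metric.isBounded_iff_subset_ball 0).1 Q.roots.toFinset.finite_toSet.isBounded
  obtain ⟨M, hM⟩ := (isCompact_closedBall (0 : ℂ) ρ).bddAbove_image Q.continuous.norm.continuousOn
  filter_upwards [eventually_gt_atTop M] with r hr
  have hball : Metric.ball 0 ρ ⊆ openLemniscate Q r := fun z hz =>
    (hM (Set.mem_image_of_mem _ (Metric.ball_subset_closedBall hz))).trans_lt hr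
  have hsub : Subsingleton (ConnectedComponents (openLemniscate Q r)) := ⟨fun C D => by
    obtain ⟨x, rfl⟩ := ConnectedComponents.surjective_coe C
    obtain ⟨y, rfl⟩ := ConnectedComponents.surjective_coe D
    obtain ⟨z, hz, hzx⟩ := exists_root_coe_eq hQ x
    obtain ⟨w, hw, hwy⟩ := exists_root_coe_eq hQ y
    have hzρ := hρ (Multiset.mem_toFinset.2 hz)
    have hwρ := hρ (Multiset.mem_toFinset.2 hw)
    rw [← hzx, ← hwy,
      connectedComponents_coe_eq_coe_iff_joinedIn (isOpen_openLemniscate Q r)]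
    exact (((convex_ball 0 ρ).isPathConnected ⟨_, hzρ⟩).joinedIn _ hzρ _ hwρ).mono hball⟩
  have hcard := Finite.card_le_one_iff_subsingleton.2 hsub
  have hcrit := critCount_add_critCount_compl hQ (openLemniscate Q r)
  rw [lemniscateIndex]
  omega

theorem lemniscateIndex_eq_natDegree (hQ : 0 < Q.natDegree) {r : ℝ} (hr : 0 < r) :
    lemniscateIndex Q r = Q.natDegree := by
  have hmono : ∀ {a b : ℝ}, 0 < a → a ≤ b → lemniscateIndex Q a ≤ lemniscateIndex Q b :=
    fun ha hab => le_of_eventually_nhdsLT_le_of_eventually_nhdsGT_le hab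
      (fun t ht => eventually_nhdsLT_lemniscateIndex_le hQ (ha.trans ht.1))
      (fun t ht => eventually_nhdsGT_lemniscateIndex_le hQ (ha.trans_le ht.1))
  obtain ⟨a, ha, ha₀, har⟩ :=
    ((eventually_natDegree_le_lemniscateIndex hQ).and (Ioo_mem_nhdsGT hr)).exists
  obtain ⟨b, hb, hrb⟩ :=
    ((eventually_lemniscateIndex_le_natDegree hQ).and (eventually_ge_atTop r)).exists
  exact le_antisymm ((hmono hr hrb).trans hb) (ha.trans (hmono ha₀ har.le))

theorem card_connectedComponents_openLemniscate (hQ : 0 < Q.natDegree) {r : ℝ} (hr : 0 < r) :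
    Nat.card (ConnectedComponents (openLemniscate Q r)) =
      critCount Q (openLemniscate Q r)ᶜ + 1 := by
  have hindex := lemniscateIndex_eq_natDegree hQ hr
  have hcompl := critCount_add_critCount_compl hQ (openLemniscate Q r)
  rw [lemniscateIndex] at hindex
  omega

end Lemniscate

section Green

/-- The `n`-th approximation `deg(P)⁻ⁿ log⁺ |P^{∘n}|` of the Green function of the polynomial
`P`. -/
noncomputable def polyGreenApprox (P : ℂ[X]) (n : ℕ) (z : ℂ) : ℝ :=
  Real.log (max 1 ‖(fun w => P.eval w)^[n] z‖) / (P.natDegree : ℝ) ^ n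

/-- The Green function of the polynomial `P`, measuring the escape rate of orbits to infinity. The
limit exists when `P` has degree at least two. -/
noncomputable def polyGreen (P : ℂ[X]) (z : ℂ) : ℝ :=
  limUnder atTop fun n => polyGreenApprox P n z

variable {P : ℂ[X]}

theorem continuous_log_max_one_norm {X : Type*} [TopologicalSpace X] {f : X → ℂ}
    (hf : Continuous f) : Continuous fun x => Real.log (max 1 ‖f x‖) :=
  (continuous_const.max hf.norm).log fun _ => (lt_max_of_lt_left one_pos).ne'

theorem tendsto_log_norm_eval_sub (hP : 0 < P.natDegree) :
    Tendsto (fun z => Real.log (max 1 ‖P.eval z‖) - P.natDegree * Real.log (max 1 ‖z‖))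
      (cocompact ℂ) (𝓝 (Real.log ‖P.leadingCoeff‖)) := by
  have hlead : P.leadingCoeff ≠ 0 := leadingCoeff_ne_zero.2 (ne_zero_of_natDegree_gt hP)
  have hnorm : ∀ᶠ z : ℂ in cocompact ℂ, 1 ≤ ‖z‖ :=
    (tendsto_norm_cocompact_atTop (E := ℂ)).eventually_ge_atTop 1
  have heval : ∀ᶠ z in cocompact ℂ, 1 ≤ ‖P.eval z‖ :=
    (P.tendsto_norm_atTop (natDegree_pos_iff_degree_pos.1 hP)
      tendsto_norm_cocompact_atTop).eventually_ge_atTop 1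
  have hne : ∀ᶠ z in cocompact ℂ, P.leadingCoeff * z ^ P.natDegree ≠ 0 := by
    filter_upwards [hnorm] with z hz
    exact mul_ne_zero hlead (pow_ne_zero _ (norm_pos_iff.1 (one_pos.trans_le hz)))
  have hequiv := isEquivalent_cobounded_leading_monomial (P := P)
  rw [Metric.cobounded_eq_cocompact, Asymptotics.isEquivalent_iff_tendsto_one hne] at hequiv
  have hlog : Tendsto (fun z => Real.log ‖P.eval z / (P.leadingCoeff * z ^ P.natDegree)‖)
      (cocompact ℂ) (𝓝 0) := by
    simpa using hequiv.norm.log (by simp)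
  rw [← zero_add (Real.log ‖P.leadingCoeff‖)]
  refine (hlog.add_const _).congr' ?_
  filter_upwards [hnorm, heval] with z hz hPz
  have hz₀ : ‖z‖ ≠ 0 := (one_pos.trans_le hz).ne'
  rw [max_eq_right hz, max_eq_right hPz, norm_div, norm_mul, norm_pow,
    Real.log_div (one_pos.trans_le hPz).ne'
      (mul_ne_zero (norm_ne_zero_iff.2 hlead) (pow_ne_zero _ hz₀)),
    Real.log_mul (norm_ne_zero_iff.2 hlead) (pow_ne_zero _ hz₀), Real.log_pow]
  ring

theorem exists_forall_abs_le_of_tendsto_cocompact {X : Type*} [TopologicalSpace X] {f : X → ℝ}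
    {l : ℝ} (hf : Continuous f) (hl : Tendsto f (cocompact X) (𝓝 l)) : ∃ M, ∀ x, |f x| ≤ M := by
  obtain ⟨K, hK, hKf⟩ := mem_cocompact.1 (hl.abs.eventually_le_const (lt_add_one |l|))
  obtain ⟨M, hM⟩ := hK.bddAbove_image hf.abs.continuousOn
  refine ⟨max M (|l| + 1), fun x => ?_⟩
  by_cases hx : x ∈ K
  · exact le_max_of_le_left (hM (Set.mem_image_of_mem _ hx))
  · exact le_max_of_le_right (hKf hx)

theorem polyGreenApprox_nonneg (P : ℂ[X]) (n : ℕ) (z : ℂ) : 0 ≤ polyGreenApprox P n z :=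
  div_nonneg (Real.log_nonneg (le_max_left _ _)) (by positivity)

theorem continuous_polyGreenApprox (P : ℂ[X]) (n : ℕ) : Continuous (polyGreenApprox P n) :=
  (continuous_log_max_one_norm (P.continuous.iterate n)).div_const _

theorem polyGreenApprox_eval (hP : P.natDegree ≠ 0) (n : ℕ) (z : ℂ) :
    polyGreenApprox P n (P.eval z) = P.natDegree * polyGreenApprox P (n + 1) z := by
  have hd : (P.natDegree : ℝ) ≠ 0 := Nat.cast_ne_zero.2 hP
  rw [polyGreenApprox, polyGreenApprox, Function.iterate_succ_apply, pow_succ', mul_div_assoc',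
    mul_div_mul_left _ _ hd]

theorem exists_dist_polyGreenApprox_succ_le (hP : 2 ≤ P.natDegree) :
    ∃ M, ∀ z n, dist (polyGreenApprox P n z) (polyGreenApprox P (n + 1) z) ≤ M / 2 / 2 ^ n := by
  obtain ⟨M, hM⟩ : ∃ M, ∀ z,
      |Real.log (max 1 ‖P.eval z‖) - P.natDegree * Real.log (max 1 ‖z‖)| ≤ M :=
    exists_forall_abs_le_of_tendsto_cocompact
      ((continuous_log_max_one_norm P.continuous).sub
        ((continuous_log_max_one_norm continuous_id).const_mul _))
      (tendsto_log_norm_eval_sub (zero_lt_two.trans_le hP))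
  have hd : (2 : ℝ) ≤ P.natDegree := mod_cast hP
  refine ⟨M, fun z n => ?_⟩
  set w := (fun w => P.eval w)^[n] z with hw
  have hdiff : polyGreenApprox P (n + 1) z - polyGreenApprox P n z =
      (Real.log (max 1 ‖P.eval w‖) - P.natDegree * Real.log (max 1 ‖w‖)) /
        (P.natDegree : ℝ) ^ (n + 1) := by
    simp only [polyGreenApprox, Function.iterate_succ_apply', ← hw]
    field_simp
    ring
  rw [dist_comm, Real.dist_eq, hdiff, abs_div, abs_pow, Nat.abs_cast, div_div, ← pow_succ']
  gcongr
  · exact (abs_nonneg _).trans (hM w)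
  · exact hM w

theorem tendsto_polyGreenApprox (hP : 2 ≤ P.natDegree) (z : ℂ) :
    Tendsto (fun n => polyGreenApprox P n z) atTop (𝓝 (polyGreen P z)) := by
  obtain ⟨M, hM⟩ := exists_dist_polyGreenApprox_succ_le hP
  exact (cauchySeq_of_le_geometric_two (hM z)).tendsto_limUnder

theorem tendstoUniformly_polyGreenApprox (hP : 2 ≤ P.natDegree) :
    TendstoUniformly (polyGreenApprox P) (polyGreen P) atTop := by
  obtain ⟨M, hM⟩ := exists_dist_polyGreenApprox_succ_le hP
  have hbound : Tendsto (fun n : ℕ => M / 2 ^ n) atTop (𝓝 0) :=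
    tendsto_const_nhds.div_atTop (tendsto_pow_atTop_atTop_of_one_lt one_lt_two)
  rw [Metric.tendstoUniformly_iff]
  intro ε hε
  filter_upwards [hbound.eventually_lt_const hε] with n hn z
  rw [dist_comm]
  exact (dist_le_of_le_geometric_two_of_tendsto (hM z) (tendsto_polyGreenApprox hP z) n).trans_lt hn

theorem continuous_polyGreen (hP : 2 ≤ P.natDegree) : Continuous (polyGreen P) :=
  (tendstoUniformly_polyGreenApprox hP).continuous (.of_forall (continuous_polyGreenApprox P))

theorem polyGreen_nonneg (hP : 2 ≤ P.natDegree) (z : ℂ) : 0 ≤ polyGreen P z :=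
  ge_of_tendsto' (tendsto_polyGreenApprox hP z) fun n => polyGreenApprox_nonneg P n z

theorem polyGreen_eval (hP : 2 ≤ P.natDegree) (z : ℂ) :
    polyGreen P (P.eval z) = P.natDegree * polyGreen P z := by
  refine tendsto_nhds_unique (tendsto_polyGreenApprox hP (P.eval z)) ?_
  simp only [polyGreenApprox_eval (two_pos.trans_le hP).ne']
  exact ((tendsto_polyGreenApprox hP z).comp (tendsto_add_atTop_nat 1)).const_mul _

theorem polyGreen_iterate (hP : 2 ≤ P.natDegree) (n : ℕ) (z : ℂ) :
    polyGreen P ((P.comp^[n] X).eval z) = (P.natDegree : ℝ) ^ n * polyGreen P z := by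
  induction n with
  | zero => simp
  | succ n ih =>
    rw [Function.iterate_succ_apply', eval_comp, polyGreen_eval hP, ih, pow_succ', mul_assoc]

theorem setOf_polyGreenApprox_lt (hP : P.natDegree ≠ 0) (n : ℕ) {s : ℝ} (hs : 0 < s) :
    {z | polyGreenApprox P n z < s} =
      openLemniscate (P.comp^[n] X) (Real.exp (s * (P.natDegree : ℝ) ^ n)) := by
  ext z
  have hd : 0 < (P.natDegree : ℝ) ^ n := pow_pos (Nat.cast_pos.2 hP.bot_lt) n
  have hmax : 0 < max 1 ‖(fun w => P.eval w)^[n] z‖ := lt_max_of_lt_left one_pos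
  have hexp : 1 < Real.exp (s * (P.natDegree : ℝ) ^ n) := Real.one_lt_exp_iff.2 (mul_pos hs hd)
  rw [Set.mem_ofPred_eq, polyGreenApprox, div_lt_iff₀ hd, Real.log_lt_iff_lt_exp hmax, max_lt_iff,
    openLemniscate, Set.mem_ofPred_eq, iterate_comp_eval, eval_X, and_iff_right hexp]

theorem natDegree_iterate_comp_X_pos (hP : 0 < P.natDegree) (n : ℕ) :
    0 < (P.comp^[n] X).natDegree := by
  rw [natDegree_iterate_comp, natDegree_X, mul_one]
  exact pow_pos hP n

theorem critCount_iterate_succ (hP : 2 ≤ P.natDegree) {m : ℝ}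
    (hm : ∀ c ∈ P.derivative.roots, polyGreen P c ≤ P.natDegree * m) {S : Set ℂ}
    (hS : ∀ z ∈ S, m < polyGreen P z) (n : ℕ) :
    critCount (P.comp^[n + 1] X) S = critCount P S := by
  classical
  induction n with
  | zero => simp
  | succ n ih =>
    set F := P.comp^[n + 1] X with hF
    have hderiv : (P.comp F).derivative ≠ 0 := fun h => by
      rw [hF, ← Function.iterate_succ_apply' P.comp] at h
      exact (natDegree_iterate_comp_X_pos (two_pos.trans_le hP) _).ne' (derivative_eq_zero.1 h)
    have hnew : ∀ c ∈ (P.derivative.comp F).roots, c ∉ S := fun c hc hcS => by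
      have hroot : F.eval c ∈ P.derivative.roots := by
        rw [derivative_comp] at hderiv
        exact mem_roots'.2 ⟨fun h => hderiv (by rw [h, zero_comp, mul_zero]),
          by simpa using isRoot_of_mem_roots hc⟩
      have hle := hm _ hroot
      rw [hF, polyGreen_iterate hP, pow_succ', mul_assoc] at hle
      have hd : (1 : ℝ) ≤ P.natDegree := mod_cast one_le_two.trans hP
      have hle' := le_of_mul_le_mul_left hle (one_pos.trans_le hd)
      exact (hS c hcS).not_ge
        ((le_mul_of_one_le_left (polyGreen_nonneg hP c) (one_le_pow₀ hd)).trans hle')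
    rw [Function.iterate_succ_apply', ← hF, critCount, derivative_comp,
      roots_mul (derivative_comp P F ▸ hderiv), Multiset.countP_add,
      Multiset.countP_eq_zero.2 hnew, add_zero, ← ih, critCount]

theorem eventually_forall_coe_eq_polyGreen_le (hP : 2 ≤ P.natDegree) {m : ℝ} (hm : 0 < m) :
    ∀ᶠ n in atTop, ∀ R, ∀ x : openLemniscate (P.comp^[n] X) R,
      ∃ z : openLemniscate (P.comp^[n] X) R, polyGreen P z ≤ m ∧
        (z : ConnectedComponents (openLemniscate (P.comp^[n] X) R)) = x := by
  have hd : 0 < P.natDegree := two_pos.trans_le hP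
  have hpow : Tendsto (fun n => (P.natDegree : ℝ) ^ n * m) atTop atTop :=
    (tendsto_pow_atTop_atTop_of_one_lt (Nat.one_lt_cast.2 hP)).atTop_mul_const hm
  filter_upwards [hpow.eventually_ge_atTop (polyGreen P 0)] with n hn R x
  obtain ⟨z, hz, hzx⟩ := exists_root_coe_eq (natDegree_iterate_comp_X_pos hd n) x
  refine ⟨z, le_of_mul_le_mul_left ?_ (pow_pos (Nat.cast_pos.2 hd) n), hzx⟩
  rwa [← polyGreen_iterate hP, (isRoot_of_mem_roots hz).eq_zero]

theorem exists_isOpen_between_polyGreen_sublevels (hP : 2 ≤ P.natDegree) {m s r : ℝ} (hm : 0 < m)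
    (hms : m ≤ s) (hsr : s < r)
    (hcrit : ∀ c ∈ P.derivative.roots, polyGreen P c ≤ P.natDegree * m)
    (hgap : ∀ c ∈ P.derivative.roots, polyGreen P c < r → polyGreen P c ≤ m) :
    ∃ W : Set ℂ, IsOpen W ∧ {z | polyGreen P z ≤ s} ⊆ W ∧
      (∃ s' < r, W ⊆ {z | polyGreen P z ≤ s'}) ∧
      Nat.card (ConnectedComponents W) = critCount P {z | polyGreen P z < r}ᶜ + 1 ∧
      ∀ x : W, ∃ z : W, polyGreen P z ≤ m ∧ (z : ConnectedComponents W) = x := by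
  have hd : 0 < P.natDegree := two_pos.trans_le hP
  obtain ⟨t, hst, htr⟩ := exists_between hsr
  obtain ⟨s', hts', hs'r⟩ := exists_between htr
  have ht : 0 < t := hm.trans_le (hms.trans hst.le)
  have hunif := Metric.tendstoUniformly_iff.1 (tendstoUniformly_polyGreenApprox hP)
  obtain ⟨n, hn₁, hn₂, hroot, hn⟩ := ((hunif (t - s) (sub_pos.2 hst)).and
    ((hunif (s' - t) (sub_pos.2 hts')).and
      ((eventually_forall_coe_eq_polyGreen_le hP hm).and (eventually_ge_atTop 1)))).exists
  obtain ⟨k, rfl⟩ := Nat.exists_eq_add_of_le' hn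
  set W := openLemniscate (P.comp^[k + 1] X) (Real.exp (t * (P.natDegree : ℝ) ^ (k + 1)))
  have hW : {z | polyGreenApprox P (k + 1) z < t} = W := setOf_polyGreenApprox_lt hd.ne' _ ht
  have hsub : {z | polyGreen P z ≤ s} ⊆ W := fun z hz => by
    have h := (abs_lt.1 (hn₁ z)).1
    simp only [← hW, Set.mem_ofPred_eq] at hz ⊢
    linarith
  have hsup : W ⊆ {z | polyGreen P z ≤ s'} := fun z hz => by
    have h := (abs_lt.1 (hn₂ z)).2
    simp only [← hW, Set.mem_ofPred_eq] at hz ⊢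
    linarith
  have hcount : critCount (P.comp^[k + 1] X) Wᶜ = critCount P {z | polyGreen P z < r}ᶜ := by
    rw [critCount_iterate_succ hP hcrit (S := Wᶜ) fun z hz =>
      lt_of_not_ge fun h => hz (hsub (h.trans hms))]
    exact critCount_congr fun c hc => not_congr
      ⟨fun h => (hsup h).trans_lt hs'r, fun h => hsub ((hgap c hc h).trans hms)⟩
  refine ⟨W, isOpen_openLemniscate _ _, hsub, ⟨s', hs'r, hsup⟩, ?_, hroot _⟩
  rw [← hcount, card_connectedComponents_openLemniscate (natDegree_iterate_comp_X_pos hd _)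
    (Real.exp_pos _)]

theorem eventually_nhdsLT_forall_criticalPoint {r : ℝ}
    (hcrit : ∀ c ∈ P.derivative.roots, polyGreen P c < P.natDegree * r) :
    ∀ᶠ m in 𝓝[<] r, ∀ c ∈ P.derivative.roots,
      polyGreen P c ≤ P.natDegree * m ∧ (polyGreen P c < r → polyGreen P c ≤ m) := by
  have h : ∀ᶠ m in 𝓝[<] r, ∀ c ∈ P.derivative.roots.toFinset,
      polyGreen P c ≤ P.natDegree * m ∧ (polyGreen P c < r → polyGreen P c ≤ m) := by
    rw [eventually_all_finset]
    refine fun c hc => Eventually.and ?_ (eventually_imp_distrib_left.2 fun h => ?_)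
    · have hcont : Continuous fun m : ℝ => P.natDegree * m := continuous_const.mul continuous_id
      exact nhdsWithin_le_nhds (hcont.continuousAt.eventually_const_le
        (hcrit c (Multiset.mem_toFinset.1 hc)))
    · exact nhdsWithin_le_nhds (eventually_ge_nhds h)
  simpa only [Multiset.mem_toFinset] using h

theorem stmt3_general (hP : 2 ≤ P.natDegree) {r : ℝ} (hr : 0 < r)
    (hcrit : ∀ c ∈ P.derivative.roots, polyGreen P c < P.natDegree * r) :
    Nat.card (ConnectedComponents {z | polyGreen P z < r}) +
      critCount P {z | polyGreen P z < r} = P.natDegree := by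
  obtain ⟨m, hm, hm₀, hmr⟩ :=
    ((eventually_nhdsLT_forall_criticalPoint hcrit).and (Ioo_mem_nhdsLT hr)).exists
  have hcard := card_connectedComponents_sublevel_of_exhaustion (continuous_polyGreen hP) hmr
    (Nat.succ_ne_zero _) fun s hms hsr => exists_isOpen_between_polyGreen_sublevels hP hm₀ hms hsr
      (fun c hc => (hm c hc).1) (fun c hc => (hm c hc).2)
  have hcompl := critCount_add_critCount_compl (two_pos.trans_le hP) {z | polyGreen P z < r}
  omega

end Green

section Parameter

variable {d : ℕ}

/-- The polynomial `P_{c,a}`, of which `Pca` is the function. -/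
noncomputable def paramPoly (d : ℕ) (c : Fin (d - 2) → ℂ) (a : ℂ) : ℂ[X] :=
  C (d : ℂ)⁻¹ * X ^ d +
    ∑ j ∈ Finset.Icc 2 (d - 1), C ((-1 : ℂ) ^ (d - j) * sigmaE c (d - j) / (j : ℂ)) * X ^ j +
    C (a ^ d)

theorem eval_paramPoly (c : Fin (d - 2) → ℂ) (a z : ℂ) :
    (paramPoly d c a).eval z = Pca d c a z := by
  simp only [paramPoly, Pca, eval_add, eval_mul, eval_C, eval_pow, eval_X, eval_finsetSum,
    div_eq_inv_mul, mul_assoc]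

theorem prod_X_sub_C_critPt (hd : 2 ≤ d) (c : Fin (d - 2) → ℂ) :
    ((Finset.univ.val.map (critPt c)).map fun t => X - C t).prod =
      X * ((Finset.univ.val.map c).map fun t => X - C t).prod := by
  obtain ⟨m, rfl⟩ := Nat.exists_eq_add_of_le' hd
  rw [Multiset.map_map, Multiset.map_map]
  change ∏ i : Fin (m + 1), (X - C (critPt c i)) = X * ∏ i : Fin m, (X - C (c i))
  simp [Fin.prod_univ_succ, critPt]

theorem X_mul_prod_X_sub_C (hd : 2 ≤ d) (c : Fin (d - 2) → ℂ) :
    X * ((Finset.univ.val.map c).map fun t => X - C t).prod = X ^ (d - 1) +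
      ∑ j ∈ Finset.Icc 2 (d - 1), C ((-1) ^ (d - j) * sigmaE c (d - j)) * X ^ (j - 1) := by
  obtain ⟨m, rfl⟩ := Nat.exists_eq_add_of_le' hd
  rw [Multiset.prod_X_sub_X_eq_sum_esymm, Multiset.card_map, Finset.card_val, Finset.card_univ,
    Fintype.card_fin, Finset.sum_range_succ', mul_add, add_comm, Finset.mul_sum]
  congr 1
  · simp [Multiset.esymm, pow_succ']
  refine Finset.sum_nbij' (fun k => m + 1 - k) (fun j => m + 1 - j)
    (fun k hk => ?_) (fun j hj => ?_) (fun k hk => ?_) (fun j hj => ?_) fun k hk => ?_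
  all_goals simp only [Finset.mem_Icc, Finset.mem_range] at *
  iterate 4 omega
  obtain ⟨l, rfl⟩ := Nat.exists_eq_add_of_lt hk
  have h₁ : k + l + 1 + 2 - (k + l + 1 + 1 - k) = k + 1 := by omega
  have h₂ : k + l + 1 + 2 - 2 - (k + 1) = l := by omega
  have h₃ : k + l + 1 + 1 - k - 1 = l + 1 := by omega
  simp only [h₁, h₂, h₃, sigmaE, map_mul, map_pow, map_neg, map_one]
  ring

theorem derivative_paramPoly (hd : 2 ≤ d) (c : Fin (d - 2) → ℂ) (a : ℂ) :
    (paramPoly d c a).derivative =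
      ((Finset.univ.val.map (critPt c)).map fun t => X - C t).prod := by
  have hd₀ : (d : ℂ) ≠ 0 := Nat.cast_ne_zero.2 (two_pos.trans_le hd).ne'
  rw [prod_X_sub_C_critPt hd, X_mul_prod_X_sub_C hd, paramPoly]
  simp only [derivative_add, derivative_C, add_zero, derivative_sum, derivative_C_mul_X_pow,
    inv_mul_cancel₀ hd₀, map_one, one_mul]
  congr 1
  refine Finset.sum_congr rfl fun j hj => ?_
  have hj₀ : (j : ℂ) ≠ 0 := Nat.cast_ne_zero.2 (two_pos.trans_le (Finset.mem_Icc.1 hj).1).ne'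
  rw [div_mul_cancel₀ _ hj₀]

theorem roots_derivative_paramPoly (hd : 2 ≤ d) (c : Fin (d - 2) → ℂ) (a : ℂ) :
    (paramPoly d c a).derivative.roots = Finset.univ.val.map (critPt c) := by
  rw [derivative_paramPoly hd, roots_multiset_prod_X_sub_C]

theorem natDegree_paramPoly (hd : 2 ≤ d) (c : Fin (d - 2) → ℂ) (a : ℂ) :
    (paramPoly d c a).natDegree = d := by
  have h := natDegree_derivative (paramPoly d c a)
  rw [derivative_paramPoly hd, natDegree_multiset_prod_X_sub_C_eq_card, Multiset.card_map,
    Finset.card_val, Finset.card_univ, Fintype.card_fin] at h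
  omega

theorem polyGreen_paramPoly (hd : 2 ≤ d) (c : Fin (d - 2) → ℂ) (a : ℂ) :
    polyGreen (paramPoly d c a) = green d c a := by
  funext z
  simp only [polyGreen, polyGreenApprox, green, natDegree_paramPoly hd, eval_paramPoly]

open Classical in
theorem critCount_paramPoly (hd : 2 ≤ d) (c : Fin (d - 2) → ℂ) (a : ℂ) (S : Set ℂ) :
    critCount (paramPoly d c a) S = (Finset.univ.filter fun i => critPt c i ∈ S).card := by
  rw [critCount, roots_derivative_paramPoly hd, Multiset.countP_map]
  rfl

theorem green_critPt_le_Gmax (c : Fin (d - 2) → ℂ) (a : ℂ) (i : Fin (d - 1)) :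
    green d c a (critPt c i) ≤ Gmax d c a :=
  le_ciSup (f := fun i => green d c a (critPt c i)) (Set.finite_range _).bddAbove i

end Parameter

/-- If `q` critical points (with multiplicity) of `P_{c,a}` lie in `U₁ = {g < G(c,a)}`, then
`U₁` has exactly `d - q` connected components. -/
theorem stmt3 (d : ℕ) (hd : 3 ≤ d) (c : Fin (d - 2) → ℂ) (a : ℂ)
    (hG : 0 < Gmax d c a) :
    Nat.card (ConnectedComponents ↥{z : ℂ | green d c a z < Gmax d c a})
      = d - (Finset.univ.filter
          fun i : Fin (d - 1) => green d c a (critPt c i) < Gmax d c a).card := by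
  have hd₂ : 2 ≤ d := Nat.le_of_succ_le hd
  have hdeg := natDegree_paramPoly hd₂ c a
  have hgreen := polyGreen_paramPoly hd₂ c a
  have hcrit : ∀ x ∈ (paramPoly d c a).derivative.roots,
      polyGreen (paramPoly d c a) x < (paramPoly d c a).natDegree * Gmax d c a := fun x hx => by
    rw [roots_derivative_paramPoly hd₂] at hx
    obtain ⟨i, -, rfl⟩ := Multiset.mem_map.1 hx
    rw [hgreen, hdeg]
    exact (green_critPt_le_Gmax c a i).trans_lt
      (lt_mul_of_one_lt_left hG (Nat.one_lt_cast.2 hd₂))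
  have hcount := stmt3_general (hdeg.symm ▸ hd₂) hG hcrit
  rw [hdeg, hgreen, critCount_paramPoly hd₂] at hcount
  convert Nat.eq_sub_of_add_eq hcount
  exact Iff.rfl
end

section
/- Let d ≥ 3. Define U ⊆ ℂ^{d−1} as the set of parameters (c,a) for which there exist a proper subset S ⊊ {0,…,d−2} (possibly empty) and an enumeration j_1,…,j_m of the complement {0,…,d−2}∖S (so m = d−1−|S| ≥ 1) such that g_{c,a}(c_i) < g_{c,a}(c_{j_1}) for every i ∈ S, and g_{c,a}(c_{j_1}) < g_{c,a}(c_{j_2}) < ⋯ < g_{c,a}(c_{j_m}). Then U is an open subset of ℂ^{d−1}, U is contained in ℂ^{d−1}∖C_d, and U is dense in ℂ^{d−1}∖C_d (every point of ℂ^{d−1}∖C_d is in the closure of U). -/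
open Filter Topology MeasureTheory

/-- The open set `U`: parameters admitting a proper subset `S` of the critical indices and an
enumeration `j` of its complement along which the critical Green values strictly increase, all
values over `S` being smaller than the first one. -/
def Uset (d : ℕ) : Set ((Fin (d - 2) → ℂ) × ℂ) :=
  {p | ∃ S : Finset (Fin (d - 1)), S ≠ Finset.univ ∧
    ∃ m : ℕ, ∃ hm : 1 ≤ m, ∃ j : Fin m → Fin (d - 1),
      Function.Injective j ∧ Set.range j = (↑(Sᶜ) : Set (Fin (d - 1))) ∧
      (∀ i ∈ S, green d p.1 p.2 (critPt p.1 i) < green d p.1 p.2 (critPt p.1 (j ⟨0, hm⟩))) ∧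
      StrictMono fun k : Fin m => green d p.1 p.2 (critPt p.1 (j k))}

/-!
Whether a parameter lies in `U` depends only on its largest critical Green value, which must be
attained at a single critical point. Off the frontiers of the finitely many closed sets
`{g_i = g_j}`, whose union is nowhere dense, a tie at one parameter persists at all nearby ones; so
density comes down to excluding a local tie between critical points that escape.

The `g_i` are locally uniform limits of `d⁻ⁿ log⁺ |Pⁿ(c_i)|`, hence continuous and, along each
complex line of parameters, harmonic where positive. On a line along which `c_i` escapes near
infinity the set `{g_i > 0}` is connected: the orbit of `c_i` would be bounded on the frontier of a
bounded component, and then inside it by the maximum principle. Analytic continuation therefore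
spreads a local tie `g_i = g_j` over the whole of `{g_i > 0}` on such a line. Since `P_{c,a}(z)` is
homogeneous in `(c, a, z)`, the line can be chosen to pass through a distant multiple of a parameter
at which `c_j = 0` is a fixed point and `P(c_i) ≠ 0` (for `c_i` the constant critical point `0`,
exchange `i` and `j`); there `g_i > 0 = g_j`, a contradiction.
-/

section Harmonic

open InnerProductSpace Metric Real

theorem harmonicAt_posLog_norm {f : ℂ → ℂ} {z : ℂ} (hf : AnalyticAt ℂ f z) (hz : 1 < ‖f z‖) :
    HarmonicAt (fun w ↦ log⁺ ‖f w‖) z := by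
  refine (harmonicAt_congr_nhds ?_).1 (hf.harmonicAt_log_norm (norm_pos_iff.1 (one_pos.trans hz)))
  filter_upwards [hf.continuousAt.norm.eventually_const_lt hz] with w hw
  exact (posLog_eq_log (by rw [abs_norm]; exact hw.le)).symm

theorem norm_le_of_abs_re_le {F : ℂ → ℂ} {c z : ℂ} {R M : ℝ} (hM : 0 < M)
    (hF : DifferentiableOn ℂ F (ball c R)) (hre : ∀ w ∈ ball c R, |(F w).re| ≤ M)
    (him : (F c).im = 0) (hz : z ∈ ball c (R / 2)) : ‖F z‖ ≤ 5 * M := by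
  have hzR : ‖z - c‖ < R / 2 := mem_ball_iff_norm.1 hz
  have hR : 0 < R := by linarith [norm_nonneg (z - c)]
  have hmaps : Set.MapsTo (c + ·) (ball 0 R) (ball c R) := fun w hw ↦ by simpa using hw
  have hcenter : ‖F c‖ ≤ M := by
    rw [← Complex.abs_re_eq_norm.2 him]
    exact hre c (mem_ball_self hR)
  have hBC := Complex.borelCaratheodory (f := fun w ↦ F (c + w)) (z := z - c) hM
    (hF.comp (by fun_prop) hmaps) (fun w hw ↦ (le_abs_self _).trans (hre _ (hmaps hw))) hR
    (by simpa using hzR.trans (half_lt_self hR))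
  rw [add_sub_cancel, add_zero] at hBC
  have hden : 0 < R - ‖z - c‖ := by linarith
  calc ‖F z‖ ≤ 2 * M * ‖z - c‖ / (R - ‖z - c‖) + ‖F c‖ * (R + ‖z - c‖) / (R - ‖z - c‖) := hBC
    _ ≤ 2 * M + M * 3 := by
      gcongr ?_ + ?_
      · rw [div_le_iff₀ hden]
        gcongr
        linarith
      · rw [mul_div_assoc]
        gcongr
        rw [div_le_iff₀ hden]
        linarith
    _ = 5 * M := by ring

/- The harmonic conjugates are normalised to vanish at the centre, so that by Borel–Carathéodory
uniform convergence passes from the real parts to the holomorphic functions. -/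
theorem harmonicAt_of_tendstoUniformlyOn {u : ℕ → ℂ → ℝ} {g : ℂ → ℝ} {c : ℂ} {R : ℝ} (hR : 0 < R)
    (hu : ∀ n, HarmonicOnNhd (u n) (ball c R)) (hug : TendstoUniformlyOn u g atTop (ball c R)) :
    HarmonicAt g c := by
  have hconj (n : ℕ) : ∃ F : ℂ → ℂ, AnalyticOnNhd ℂ F (ball c R) ∧
      (∀ z ∈ ball c R, (F z).re = u n z) ∧ (F c).im = 0 := by
    obtain ⟨F, hF, hre⟩ := (hu n).exists_analyticOnNhd_ball_re_eq
    exact ⟨fun z ↦ F z - (F c).im * Complex.I, hF.sub analyticOnNhd_const,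
      fun z hz ↦ by simpa using hre hz, by simp⟩
  choose F hF hre him using hconj
  have hsub : ball c (R / 2) ⊆ ball c R := ball_subset_ball (half_le_self hR.le)
  have hcauchy : UniformCauchySeqOn F atTop (ball c (R / 2)) := by
    rw [Metric.uniformCauchySeqOn_iff]
    intro ε hε
    obtain ⟨N, hN⟩ := Metric.uniformCauchySeqOn_iff.1 hug.uniformCauchySeqOn (ε / 6) (by positivity)
    refine ⟨N, fun m hm n hn z hz ↦ ?_⟩
    have hbound : ‖F m z - F n z‖ ≤ 5 * (ε / 6) := by
      refine norm_le_of_abs_re_le (F := fun w ↦ F m w - F n w) (by positivity)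
        ((hF m).sub (hF n)).differentiableOn (fun w hw ↦ ?_) (by simp [him]) hz
      simpa [hre _ w hw, Real.dist_eq] using (hN m hm n hn w hw).le
    rw [dist_eq_norm]
    linarith
  have hlim : TendstoUniformlyOn F (fun z ↦ limUnder atTop (F · z)) atTop (ball c (R / 2)) :=
    hcauchy.tendstoUniformlyOn_of_tendsto fun z hz ↦ (hcauchy.cauchySeq hz).tendsto_limUnder
  have hdiff := hlim.tendstoLocallyUniformlyOn.differentiableOn
    (Eventually.of_forall fun n ↦ ((hF n).mono hsub).differentiableOn) isOpen_ball
  have hball : ball c (R / 2) ∈ 𝓝 c := ball_mem_nhds c (half_pos hR)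
  refine (harmonicAt_congr_nhds ?_).1 (hdiff.analyticAt hball).harmonicAt_re
  filter_upwards [hball] with z hz
  refine tendsto_nhds_unique ((Complex.continuous_re.tendsto _).comp (hlim.tendsto_at hz)) ?_
  simpa only [Function.comp_def, hre _ z (hsub hz)] using hug.tendsto_at (hsub hz)

end Harmonic

section Connected

theorem isPreconnected_setOf_lt_norm {E : Type*} [NormedAddCommGroup E] [NormedSpace ℝ E]
    (hE : 1 < Module.rank ℝ E) {r : ℝ} (hr : 0 ≤ r) : IsPreconnected {x : E | r < ‖x‖} := by
  have himage : {x : E | r < ‖x‖} =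
      (fun y : ℝ × E ↦ y.1 • y.2) '' (Set.Ioi r ×ˢ Metric.sphere (0 : E) 1) := by
    ext x
    constructor
    · intro hx
      have hx0 : ‖x‖ ≠ 0 := (hr.trans_lt hx).ne'
      exact ⟨(‖x‖, ‖x‖⁻¹ • x), ⟨hx, by simp [norm_smul, hx0]⟩, by simp [smul_smul, hx0]⟩
    · rintro ⟨⟨t, y⟩, ⟨ht : r < t, hy⟩, rfl⟩
      simpa [norm_smul, mem_sphere_zero_iff_norm.1 hy, abs_of_pos (hr.trans_lt ht)] using ht
  rw [himage]
  exact (isPreconnected_Ioi.prod (isPreconnected_sphere hE 0 1)).image _ (by fun_prop)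

theorem isPreconnected_of_connectedComponentIn_inter_nonempty {X : Type*} [TopologicalSpace X]
    {S T : Set X} (hT : IsPreconnected T) (hTS : T ⊆ S)
    (hST : ∀ x ∈ S, (connectedComponentIn S x ∩ T).Nonempty) : IsPreconnected S := by
  rcases S.eq_empty_or_nonempty with rfl | ⟨x, hx⟩
  · exact isPreconnected_empty
  obtain ⟨t, -, ht⟩ := hST x hx
  refine isPreconnected_of_forall t fun y hy ↦ ⟨connectedComponentIn S y,
    connectedComponentIn_subset S y, ?_, mem_connectedComponentIn hy,
    isPreconnected_connectedComponentIn⟩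
  obtain ⟨z, hzC, hzT⟩ := hST y hy
  rw [connectedComponentIn_eq hzC]
  exact hT.subset_connectedComponentIn hzT hTS ht

theorem disjoint_frontier_connectedComponentIn {X : Type*} [TopologicalSpace X]
    [LocallyConnectedSpace X] {S : Set X} (hS : IsOpen S) (x : X) :
    Disjoint (frontier (connectedComponentIn S x)) S := by
  rw [hS.connectedComponentIn.frontier_eq, Set.disjoint_left]
  rintro z ⟨hzcl, hzC⟩ hzS
  obtain ⟨y, hyz, hyx⟩ := mem_closure_iff.1 hzcl _ hS.connectedComponentIn
    (mem_connectedComponentIn hzS)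
  rw [connectedComponentIn_eq hyx, ← connectedComponentIn_eq hyz] at hzC
  exact hzC (mem_connectedComponentIn hzS)

theorem eqOn_setOf_pos_of_eventuallyEq {V : Type*} [NormedAddCommGroup V] [NormedSpace ℝ V]
    {f g : V → ℝ} (hf : Continuous f) (hg : Continuous g) (hfa : ∀ x, 0 < f x → AnalyticAt ℝ f x)
    (hga : ∀ x, 0 < g x → AnalyticAt ℝ g x) (hconn : IsPreconnected {x | 0 < f x}) {x₀ : V}
    (hx₀ : 0 < f x₀) (hfg : f =ᶠ[𝓝 x₀] g) : Set.EqOn f g {x | 0 < f x} := by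
  suffices hsub : {x | 0 < f x} ⊆ {x | f =ᶠ[𝓝 x] g} from fun x hx ↦ (hsub hx).self_of_nhds
  refine hconn.subset_of_closure_inter_subset isOpen_setOfPred_eventually_nhds ⟨x₀, hx₀, hfg⟩ ?_
  rintro x ⟨hxcl, hxpos : 0 < f x⟩
  have hfgx : f x = g x :=
    closure_minimal (fun y hy ↦ hy.self_of_nhds) (isClosed_eq hf hg) hxcl
  obtain ⟨r, hr, hball⟩ := Metric.eventually_nhds_iff_ball.1
    ((hfa x hxpos).eventually_analyticAt.and (hga x (hfgx ▸ hxpos)).eventually_analyticAt)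
  obtain ⟨y, hyx, hy⟩ := mem_closure_iff.1 hxcl _ Metric.isOpen_ball (Metric.mem_ball_self hr)
  have heq : Set.EqOn f g (Metric.ball x r) :=
    AnalyticOnNhd.eqOn_of_preconnected_of_eventuallyEq (fun z hz ↦ (hball z hz).1)
      (fun z hz ↦ (hball z hz).2) Metric.isPreconnected_ball hyx hy
  exact heq.eventuallyEq_of_mem (Metric.ball_mem_nhds x hr)

end Connected

section Maximizers

theorem dense_iInter_compl_frontier {X ι : Type*} [TopologicalSpace X] [BaireSpace X]
    [Countable ι] {B : ι → Set X} (hB : ∀ i, IsClosed (B i)) : Dense (⋂ i, (frontier (B i))ᶜ) :=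
  dense_iInter_of_isOpen (fun _ ↦ isClosed_frontier.isOpen_compl)
    fun i ↦ interior_eq_empty_iff_dense_compl.1 (interior_frontier (hB i))

theorem isOpen_setOf_exists_forall_lt {X ι : Type*} [TopologicalSpace X] [Finite ι]
    {f : ι → X → ℝ} (hf : ∀ i, Continuous (f i)) : IsOpen {x | ∃ i, ∀ j ≠ i, f j x < f i x} := by
  simp only [Set.ofPred_exists, Set.ofPred_forall]
  exact isOpen_iUnion fun i ↦ isOpen_iInter_of_finite fun j ↦
    isOpen_iInter_of_finite fun _ ↦ isOpen_lt (hf j) (hf i)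

theorem subset_closure_setOf_exists_forall_lt {X ι : Type*} [TopologicalSpace X] [BaireSpace X]
    [Finite ι] [Nonempty ι] {f : ι → X → ℝ} (hf : ∀ i, Continuous (f i)) {W : Set X}
    (hW : IsOpen W)
    (h : ∀ x ∈ W, ∀ i j, i ≠ j → (∀ k, f k x ≤ f i x) → ¬ f i =ᶠ[𝓝 x] f j) :
    W ⊆ closure {x | ∃ i, ∀ j ≠ i, f j x < f i x} := by
  let tie (e : ι × ι) : Set X := {x | f e.1 x = f e.2 x}
  have hdense : Dense (⋂ e, (frontier (tie e))ᶜ) :=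
    dense_iInter_compl_frontier fun e ↦ isClosed_eq (hf e.1) (hf e.2)
  refine (hdense.open_subset_closure_inter hW).trans (closure_mono ?_)
  rintro x ⟨hxW, hx⟩
  obtain ⟨i, hi⟩ := Finite.exists_max (f · x)
  refine ⟨i, fun j hji ↦ (hi j).lt_of_ne fun hij ↦ h x hxW i j hji.symm hi ?_⟩
  have hmem : x ∈ interior (tie (i, j)) := by
    by_contra hnot
    exact Set.mem_iInter.1 hx (i, j) ⟨subset_closure hij.symm, hnot⟩
  exact mem_interior_iff_mem_nhds.1 hmem

theorem exists_strictMono_enumeration_iff {ι α : Type*} [Fintype ι] [DecidableEq ι] [Preorder α]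
    (v : ι → α) :
    (∃ S : Finset ι, S ≠ Finset.univ ∧ ∃ m : ℕ, ∃ hm : 1 ≤ m, ∃ j : Fin m → ι,
      Function.Injective j ∧ Set.range j = (↑(Sᶜ) : Set ι) ∧
      (∀ i ∈ S, v i < v (j ⟨0, hm⟩)) ∧ StrictMono fun k ↦ v (j k)) ↔
    ∃ i, ∀ j ≠ i, v j < v i := by
  constructor
  · rintro ⟨S, -, m, hm, j, -, hrange, hS, hmono⟩
    have hlast (k : Fin m) : k ≤ ⟨m - 1, by lia⟩ := Fin.le_def.2 (by grind)
    refine ⟨j ⟨m - 1, by lia⟩, fun i hi ↦ ?_⟩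
    by_cases hiS : i ∈ S
    · exact (hS i hiS).trans_le (hmono.monotone (hlast _))
    · obtain ⟨k, rfl⟩ : i ∈ Set.range j := by simpa [hrange] using hiS
      exact hmono ((hlast k).lt_of_ne fun hk ↦ hi (hk ▸ rfl))
  · rintro ⟨i, hi⟩
    exact ⟨{i}ᶜ, by simp [Finset.ext_iff], 1, le_rfl, fun _ ↦ i,
      Function.injective_of_subsingleton _, by simp, by simpa using hi, Subsingleton.strictMono _⟩

end Maximizers

section EscapeRate

open Real

/-- `f` grows like a polynomial of degree `d`: on the scale of `log⁺ ‖·‖` it multiplies by `d`, with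
error at most `C`. The constant is kept explicit to state uniformity in families. -/
def HasLogGrowth {X : Type*} [SeminormedAddCommGroup X] (d : ℕ) (C : ℝ) (f : X → X) : Prop :=
  ∀ z, |log⁺ ‖f z‖ - d * log⁺ ‖z‖| ≤ C

/-- The `n`-th approximant of the Green function of `f`. -/
noncomputable def escapeApprox {X : Type*} [SeminormedAddCommGroup X] (d : ℕ) (f : X → X) (n : ℕ)
    (z : X) : ℝ :=
  log⁺ ‖f^[n] z‖ / d ^ n

/-- The Green function of a map `f` of degree `d`. -/
noncomputable def escapeRate {X : Type*} [SeminormedAddCommGroup X] (d : ℕ) (f : X → X) (z : X) :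
    ℝ :=
  limUnder atTop (escapeApprox d f · z)

variable {X : Type*} [SeminormedAddCommGroup X] {d : ℕ} {C : ℝ} {f : X → X} {z : X}

theorem escapeRate_eq_zero_of_isBounded (hd : 2 ≤ d)
    (hz : Bornology.IsBounded (Set.range fun n ↦ f^[n] z)) : escapeRate d f z = 0 := by
  obtain ⟨R, hR⟩ := hz.exists_norm_le
  have hpow : Tendsto (fun n : ℕ ↦ (d : ℝ) ^ n) atTop atTop :=
    tendsto_pow_atTop_atTop_of_one_lt (by exact_mod_cast hd)
  refine Tendsto.limUnder_eq (squeeze_zero (fun n ↦ div_nonneg posLog_nonneg (by positivity))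
    (fun n ↦ ?_) (hpow.const_div_atTop (log⁺ R)))
  exact div_le_div_of_nonneg_right
    (posLog_le_posLog (norm_nonneg _) (hR _ (Set.mem_range_self n))) (by positivity)

theorem not_isBounded_range_iterate {r : ℝ} (hr : 0 < r)
    (hf : ∀ w : X, r ≤ ‖w‖ → 2 * ‖w‖ ≤ ‖f w‖) (hz : r ≤ ‖z‖) :
    ¬ Bornology.IsBounded (Set.range fun n ↦ f^[n] z) := by
  have hgrow (n : ℕ) : 2 ^ n * r ≤ ‖f^[n] z‖ := by
    induction n with
    | zero => simpa using hz
    | succ n ih =>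
      have hrn : r ≤ ‖f^[n] z‖ := le_trans (le_mul_of_one_le_left hr.le (one_le_pow₀ one_le_two)) ih
      rw [Function.iterate_succ_apply', pow_succ']
      linarith [hf _ hrn]
  intro hbdd
  obtain ⟨R, hR⟩ := hbdd.exists_norm_le
  obtain ⟨n, hn⟩ := pow_unbounded_of_one_lt (R / r) (one_lt_two (α := ℝ))
  rw [div_lt_iff₀ hr] at hn
  linarith [hgrow n, hR _ (Set.mem_range_self n)]

namespace HasLogGrowth

theorem dist_escapeApprox_succ_le (hd : 2 ≤ d) (hf : HasLogGrowth d C f) (z : X) (n : ℕ) :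
    dist (escapeApprox d f n z) (escapeApprox d f (n + 1) z) ≤ C / 2 / 2 ^ n := by
  have hd' : (2 : ℝ) ≤ d := by exact_mod_cast hd
  have hC : 0 ≤ C := (abs_nonneg _).trans (hf z)
  have hdiff : escapeApprox d f (n + 1) z - escapeApprox d f n z =
      (log⁺ ‖f (f^[n] z)‖ - d * log⁺ ‖f^[n] z‖) / d ^ (n + 1) := by
    simp only [escapeApprox, Function.iterate_succ_apply']
    field_simp
    ring
  rw [dist_comm, Real.dist_eq, hdiff, abs_div,
    abs_of_nonneg (by positivity : 0 ≤ (d : ℝ) ^ (n + 1)), div_div, ← pow_succ']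
  gcongr
  exact hf _

theorem tendsto_escapeApprox (hd : 2 ≤ d) (hf : HasLogGrowth d C f) (z : X) :
    Tendsto (escapeApprox d f · z) atTop (𝓝 (escapeRate d f z)) :=
  (cauchySeq_of_le_geometric_two (hf.dist_escapeApprox_succ_le hd z)).tendsto_limUnder

theorem dist_escapeApprox_escapeRate_le (hd : 2 ≤ d) (hf : HasLogGrowth d C f) (z : X) (n : ℕ) :
    dist (escapeApprox d f n z) (escapeRate d f z) ≤ C / 2 ^ n :=
  dist_le_of_le_geometric_two_of_tendsto (hf.dist_escapeApprox_succ_le hd z)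
    (hf.tendsto_escapeApprox hd z) n

theorem escapeRate_nonneg (hd : 2 ≤ d) (hf : HasLogGrowth d C f) (z : X) :
    0 ≤ escapeRate d f z :=
  ge_of_tendsto' (hf.tendsto_escapeApprox hd z) fun _ ↦ div_nonneg posLog_nonneg (by positivity)

theorem escapeRate_iterate (hd : 2 ≤ d) (hf : HasLogGrowth d C f) (n : ℕ) (z : X) :
    escapeRate d f (f^[n] z) = d ^ n * escapeRate d f z := by
  have hshift (k : ℕ) : escapeApprox d f k (f^[n] z) = d ^ n * escapeApprox d f (k + n) z := by
    simp only [escapeApprox, Function.iterate_add_apply, pow_add]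
    field_simp
  refine tendsto_nhds_unique (hf.tendsto_escapeApprox hd _) ?_
  simp_rw [hshift]
  exact ((tendsto_add_atTop_iff_nat n).2 (hf.tendsto_escapeApprox hd z)).const_mul _

theorem norm_iterate_le_exp (hd : 2 ≤ d) (hf : HasLogGrowth d C f) (hz : escapeRate d f z = 0)
    (n : ℕ) : ‖f^[n] z‖ ≤ exp C := by
  have hdist := hf.dist_escapeApprox_escapeRate_le hd (f^[n] z) 0
  rw [hf.escapeRate_iterate hd, hz, mul_zero, dist_zero_right, escapeApprox, pow_zero, div_one,
    pow_zero, div_one, Function.iterate_zero_apply, norm_of_nonneg posLog_nonneg] at hdist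
  exact (le_exp_log _).trans (exp_le_exp.2 ((le_max_right _ _).trans hdist))

theorem isBounded_range_iterate_iff (hd : 2 ≤ d) (hf : HasLogGrowth d C f) :
    Bornology.IsBounded (Set.range fun n ↦ f^[n] z) ↔ escapeRate d f z = 0 :=
  ⟨escapeRate_eq_zero_of_isBounded hd, fun hz ↦ isBounded_iff_forall_norm_le.2
    ⟨exp C, Set.forall_mem_range.2 (hf.norm_iterate_le_exp hd hz)⟩⟩

end HasLogGrowth

end EscapeRate

section Families

open InnerProductSpace Metric Real

variable {E : Type*} [NormedAddCommGroup E] [NormedSpace ℂ E] {d : ℕ} {P : E → ℂ → ℂ}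

/-- A holomorphic family of maps of the plane growing like polynomials of degree `d`, locally
uniformly in the parameter. -/
structure IsLogGrowthFamily (d : ℕ) (P : E → ℂ → ℂ) : Prop where
  differentiable : Differentiable ℂ (Function.uncurry P)
  exists_hasLogGrowth : ∀ K, IsCompact K → ∃ C, ∀ p ∈ K, HasLogGrowth d C (P p)

theorem differentiable_iterate_uncurry (hP : Differentiable ℂ (Function.uncurry P)) (n : ℕ) :
    Differentiable ℂ fun q : E × ℂ ↦ (P q.1)^[n] q.2 := by
  induction n with
  | zero => exact differentiable_snd
  | succ n ih =>
    simp only [Function.iterate_succ_apply']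
    exact hP.comp (differentiable_fst.prodMk ih)

namespace IsLogGrowthFamily

variable (hd : 2 ≤ d) (hP : IsLogGrowthFamily d P)
include hd hP

theorem escapeRate_nonneg (p : E) (z : ℂ) : 0 ≤ escapeRate d (P p) z := by
  obtain ⟨C, hC⟩ := hP.exists_hasLogGrowth {p} isCompact_singleton
  exact (hC p rfl).escapeRate_nonneg hd z

theorem tendstoUniformlyOn_escapeApprox {K : Set (E × ℂ)} (hK : IsCompact K) :
    TendstoUniformlyOn (fun n q ↦ escapeApprox d (P q.1) n q.2)
      (fun q ↦ escapeRate d (P q.1) q.2) atTop K := by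
  obtain ⟨C, hC⟩ := hP.exists_hasLogGrowth _ (hK.image continuous_fst)
  have hlim : Tendsto (fun n : ℕ ↦ C / 2 ^ n) atTop (𝓝 0) :=
    (tendsto_pow_atTop_atTop_of_one_lt one_lt_two).const_div_atTop C
  rw [Metric.tendstoUniformlyOn_iff]
  intro ε hε
  filter_upwards [hlim.eventually_lt_const hε] with n hn q hq
  rw [dist_comm]
  exact ((hC _ (Set.mem_image_of_mem _ hq)).dist_escapeApprox_escapeRate_le hd _ n).trans_lt hn

theorem continuous_escapeRate : Continuous fun q : E × ℂ ↦ escapeRate d (P q.1) q.2 := by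
  have hcont (n : ℕ) : Continuous fun q : E × ℂ ↦ escapeApprox d (P q.1) n q.2 :=
    (continuous_posLog.comp
      (differentiable_iterate_uncurry hP.differentiable n).continuous.norm).div_const _
  refine continuous_iff_isClosed.2 fun s hs ↦
    (CompactlyCoherentSpace.isClosed_iff _).2 fun K hK ↦ hs.preimage ?_
  exact ((hP.tendstoUniformlyOn_escapeApprox hd hK).continuousOn
    (.of_forall fun n ↦ (hcont n).continuousOn)).domRestrict

variable {γ : ℂ → E × ℂ} (hγ : Differentiable ℂ γ)
include hγ

theorem harmonicAt_escapeRate_comp {s : ℂ} (hs : 0 < escapeRate d (P (γ s).1) (γ s).2) :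
    HarmonicAt (fun s ↦ escapeRate d (P (γ s).1) (γ s).2) s := by
  obtain ⟨δ, hδ, hδs⟩ := exists_between hs
  have hpos : ∀ᶠ t in 𝓝 s, δ < escapeRate d (P (γ t).1) (γ t).2 :=
    ((hP.continuous_escapeRate hd).comp hγ.continuous).continuousAt.eventually_const_lt hδs
  obtain ⟨r, hr, hball⟩ := Metric.eventually_nhds_iff_ball.1 hpos
  have hunif : TendstoUniformlyOn (fun n t ↦ escapeApprox d (P (γ t).1) n (γ t).2)
      (fun t ↦ escapeRate d (P (γ t).1) (γ t).2) atTop (ball s r) :=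
    ((hP.tendstoUniformlyOn_escapeApprox hd
      ((isCompact_closedBall s r).image hγ.continuous)).comp γ).mono
        fun t ht ↦ Set.mem_image_of_mem _ (ball_subset_closedBall ht)
  obtain ⟨N, hN⟩ := eventually_atTop.1 (Metric.tendstoUniformlyOn_iff.1 hunif δ hδ)
  refine harmonicAt_of_tendstoUniformlyOn hr (fun n t ht ↦ ?_)
    fun u hu ↦ (tendsto_add_atTop_nat N).eventually (hunif u hu)
  have hpos : 0 < escapeApprox d (P (γ t).1) (n + N) (γ t).2 := by
    have hdist := (abs_lt.1 (hN (n + N) (Nat.le_add_left N n) t ht)).2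
    linarith [hball t ht]
  have hlog : 0 < log⁺ ‖(P (γ t).1)^[n + N] (γ t).2‖ :=
    (div_pos_iff_of_pos_right (by positivity)).1 hpos
  have hnorm : 1 < ‖(P (γ t).1)^[n + N] (γ t).2‖ := by
    by_contra! hle
    exact hlog.ne' ((posLog_eq_zero_iff _).2 (by rwa [abs_norm]))
  have hanalytic : AnalyticAt ℂ (fun t ↦ (P (γ t).1)^[n + N] (γ t).2) t :=
    ((differentiable_iterate_uncurry hP.differentiable (n + N)).comp hγ).analyticAt t
  simp only [escapeApprox, div_eq_inv_mul]
  exact (harmonicAt_posLog_norm hanalytic hnorm).const_smul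

theorem isPreconnected_setOf_escapeRate_comp_pos
    (hinf : ∀ᶠ s in Bornology.cobounded ℂ, 0 < escapeRate d (P (γ s).1) (γ s).2) :
    IsPreconnected {s | 0 < escapeRate d (P (γ s).1) (γ s).2} := by
  set S := {s | 0 < escapeRate d (P (γ s).1) (γ s).2}
  have hSopen : IsOpen S := isOpen_lt continuous_const
    ((hP.continuous_escapeRate hd).comp hγ.continuous)
  obtain ⟨r, -, hr⟩ := hasBasis_cobounded_norm.eventually_iff.1 hinf
  refine isPreconnected_of_connectedComponentIn_inter_nonempty
    (isPreconnected_setOf_lt_norm (by simp [Complex.rank_real_complex]) (le_max_right r 0))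
    (fun s hs ↦ hr ((le_max_left r 0).trans hs.le)) fun s hs ↦ ?_
  by_contra hempty
  have hsub : connectedComponentIn S s ⊆ closedBall 0 (max r 0) := fun t ht ↦
    mem_closedBall_zero_iff.2 (not_lt.1 fun hlt ↦ hempty ⟨t, ht, hlt⟩)
  obtain ⟨C, hC⟩ := hP.exists_hasLogGrowth _
    ((isCompact_closedBall (0 : ℂ) (max r 0)).image hγ.continuous.fst)
  have hfrontier (n : ℕ) (t : ℂ) (ht : t ∈ frontier (connectedComponentIn S s)) :
      ‖(P (γ t).1)^[n] (γ t).2‖ ≤ exp C := by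
    refine (hC _ (Set.mem_image_of_mem _ ?_)).norm_iterate_le_exp hd ?_ n
    · exact closure_minimal hsub isClosed_closedBall (frontier_subset_closure ht)
    · exact le_antisymm
        (not_lt.1 (Set.disjoint_left.1 (disjoint_frontier_connectedComponentIn hSopen s) ht))
        (hP.escapeRate_nonneg hd _ _)
  have horbit (n : ℕ) : ‖(P (γ s).1)^[n] (γ s).2‖ ≤ exp C :=
    Complex.norm_le_of_forall_mem_frontier_norm_le (isBounded_closedBall.subset hsub)
      ((differentiable_iterate_uncurry hP.differentiable n).comp hγ).diffContOnCl (hfrontier n)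
      (subset_closure (mem_connectedComponentIn hs))
  exact ne_of_gt hs (escapeRate_eq_zero_of_isBounded hd
    (isBounded_iff_forall_norm_le.2 ⟨exp C, Set.forall_mem_range.2 horbit⟩))

end IsLogGrowthFamily

end Families

section Homogeneous

open InnerProductSpace Metric Real

variable {E : Type*} [NormedAddCommGroup E] [NormedSpace ℂ E] {d : ℕ} {P : E → ℂ → ℂ}

/-- A holomorphic family of maps, homogeneous of degree `d` in the parameter and the variable
together. When each `P p` is a polynomial in the variable, `P 0 1` is its leading coefficient. -/
structure IsHomogeneousFamily (d : ℕ) (P : E → ℂ → ℂ) : Prop where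
  differentiable : Differentiable ℂ (Function.uncurry P)
  map_smul_mul : ∀ (t : ℂ) (p : E) (z : ℂ), P (t • p) (t * z) = t ^ d * P p z
  map_zero_one_ne_zero : P 0 1 ≠ 0

theorem abs_posLog_sub_posLog_le {x y A B : ℝ} (hx : 0 ≤ x) (hy : 0 ≤ y) (hxy : x ≤ A * y)
    (hyx : y ≤ B * x) : |log⁺ x - log⁺ y| ≤ log⁺ A + log⁺ B := by
  have hx' : log⁺ x ≤ log⁺ A + log⁺ y := (posLog_le_posLog hx hxy).trans posLog_mul
  have hy' : log⁺ y ≤ log⁺ B + log⁺ x := (posLog_le_posLog hy hyx).trans posLog_mul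
  rw [abs_le]
  constructor <;> linarith [posLog_nonneg (x := A), posLog_nonneg (x := B)]

theorem eventually_le_norm_add_smul {f : E → ℂ} (hf : Continuous f)
    (hhom : ∀ (t : ℂ) (p : E), f (t • p) = t ^ d * f p) (p : E) {v : E} (hv : f v ≠ 0) :
    ∀ᶠ s in Bornology.cobounded ℂ, ‖f v‖ / 2 * ‖s‖ ^ d ≤ ‖f (p + s • v)‖ := by
  have hlim : Tendsto (fun s : ℂ ↦ f (s⁻¹ • p + v)) (Bornology.cobounded ℂ) (𝓝 (f v)) := by
    have hcont : Continuous fun u : ℂ ↦ f (u • p + v) := by fun_prop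
    simpa [Function.comp_def] using (hcont.tendsto 0).comp tendsto_inv₀_cobounded
  filter_upwards [hlim.norm.eventually_const_lt (half_lt_self (norm_pos_iff.2 hv)),
    Bornology.eventually_ne_cobounded 0] with s hs hs0
  have hscale : p + s • v = s • (s⁻¹ • p + v) := by rw [smul_add, smul_inv_smul₀ hs0]
  rw [hscale, hhom, norm_mul, norm_pow, mul_comm]
  gcongr

namespace IsHomogeneousFamily

section Growth

variable (hP : IsHomogeneousFamily d P)
include hP

theorem exists_norm_map_bounds : ∃ ε > 0, ∀ (p : E) (z : ℂ), ‖p‖ < ε * ‖z‖ →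
    ‖P 0 1‖ / 2 * ‖z‖ ^ d ≤ ‖P p z‖ ∧ ‖P p z‖ ≤ 2 * ‖P 0 1‖ * ‖z‖ ^ d := by
  have hb : 0 < ‖P 0 1‖ := norm_pos_iff.2 hP.map_zero_one_ne_zero
  have hcont : Continuous fun u : E ↦ ‖P u 1‖ :=
    (hP.differentiable.continuous.comp (Continuous.prodMk_left 1)).norm
  obtain ⟨ε, hε, hball⟩ := Metric.eventually_nhds_iff_ball.1
    ((hcont.continuousAt.eventually_const_lt (half_lt_self hb)).and
      (hcont.continuousAt.eventually_lt_const (lt_two_mul_self hb)))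
  refine ⟨ε, hε, fun p z hpz ↦ ?_⟩
  have hz : 0 < ‖z‖ := pos_of_mul_pos_right ((norm_nonneg p).trans_lt hpz) hε.le
  have hscale : ‖P p z‖ = ‖P (z⁻¹ • p) 1‖ * ‖z‖ ^ d := by
    rw [mul_comm, ← norm_pow, ← norm_mul, ← hP.map_smul_mul,
      smul_inv_smul₀ (norm_pos_iff.1 hz), mul_one]
  have hmem : z⁻¹ • p ∈ ball (0 : E) ε := by
    rwa [mem_ball_zero_iff, norm_smul, norm_inv, inv_mul_lt_iff₀ hz, mul_comm]
  rw [hscale]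
  exact ⟨by gcongr; exact (hball _ hmem).1.le, by gcongr; exact (hball _ hmem).2.le⟩

theorem isLogGrowthFamily : IsLogGrowthFamily d P where
  differentiable := hP.differentiable
  exists_hasLogGrowth K hK := by
    obtain ⟨ε, hε, hbounds⟩ := hP.exists_norm_map_bounds
    obtain ⟨M, hM⟩ := hK.isBounded.exists_norm_le
    have hdefect : Continuous fun q : E × ℂ ↦ log⁺ ‖P q.1 q.2‖ - d * log⁺ ‖q.2‖ :=
      (continuous_posLog.comp hP.differentiable.continuous.norm).sub
        (continuous_const.mul (continuous_posLog.comp continuous_snd.norm))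
    obtain ⟨C, hC⟩ := (hK.prod (isCompact_closedBall (0 : ℂ) (M / ε))).exists_bound_of_continuousOn
      hdefect.continuousOn
    refine ⟨max C (log⁺ (2 * ‖P 0 1‖) + log⁺ (2 / ‖P 0 1‖)), fun p hp z ↦ ?_⟩
    by_cases hz : ‖z‖ ≤ M / ε
    · exact (hC (p, z) ⟨hp, mem_closedBall_zero_iff.2 hz⟩).trans (le_max_left _ _)
    · rw [not_le, div_lt_iff₀' hε] at hz
      obtain ⟨hlower, hupper⟩ := hbounds p z ((hM p hp).trans_lt hz)
      refine le_trans ?_ (le_max_right _ _)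
      rw [← posLog_pow]
      refine abs_posLog_sub_posLog_le (norm_nonneg _) (by positivity) hupper ?_
      rwa [div_mul_eq_mul_div, le_div_iff₀' (norm_pos_iff.2 hP.map_zero_one_ne_zero), mul_comm 2,
        ← div_le_iff₀ two_pos, mul_div_right_comm]

theorem exists_two_mul_norm_le_norm_map (hd : 2 ≤ d) :
    ∃ R > 0, ∀ (p : E) (z : ℂ), R * (1 + ‖p‖) ≤ ‖z‖ → 2 * ‖z‖ ≤ ‖P p z‖ := by
  have hb : 0 < ‖P 0 1‖ := norm_pos_iff.2 hP.map_zero_one_ne_zero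
  obtain ⟨ε, hε, hbounds⟩ := hP.exists_norm_map_bounds
  refine ⟨max 1 (max ε⁻¹ (4 / ‖P 0 1‖)), by positivity, fun p z hz ↦ ?_⟩
  have hp : 1 ≤ 1 + ‖p‖ := le_add_of_nonneg_right (norm_nonneg p)
  have hlarge {R : ℝ} (hle : R ≤ max 1 (max ε⁻¹ (4 / ‖P 0 1‖))) :
      R * (1 + ‖p‖) ≤ ‖z‖ := (mul_le_mul_of_nonneg_right hle (by positivity)).trans hz
  have hz1 : 1 ≤ ‖z‖ := hp.trans (by simpa using hlarge (le_max_left _ _))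
  have hzε : 1 + ‖p‖ ≤ ε * ‖z‖ := by
    rw [← inv_mul_le_iff₀ hε]
    exact hlarge ((le_max_left _ _).trans (le_max_right _ _))
  have hzb : 4 / ‖P 0 1‖ ≤ ‖z‖ := (le_mul_of_one_le_right (by positivity) hp).trans
    (hlarge ((le_max_right _ _).trans (le_max_right _ _)))
  calc 2 * ‖z‖ = ‖P 0 1‖ / 2 * ((4 / ‖P 0 1‖) * ‖z‖) := by field_simp; norm_num
    _ ≤ ‖P 0 1‖ / 2 * ‖z‖ ^ 2 := by rw [sq]; gcongr
    _ ≤ ‖P 0 1‖ / 2 * ‖z‖ ^ d := by gcongr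
    _ ≤ ‖P p z‖ := (hbounds p z (by linarith)).1

theorem eventually_le_norm_map_add_smul (c : E →L[ℂ] ℂ) (p : E) {v : E} (hv : P v (c v) ≠ 0) :
    ∀ᶠ s in Bornology.cobounded ℂ,
      ‖P v (c v)‖ / 2 * ‖s‖ ^ d ≤ ‖P (p + s • v) (c (p + s • v))‖ :=
  eventually_le_norm_add_smul (f := fun q ↦ P q (c q))
    (hP.differentiable.continuous.comp (continuous_id.prodMk c.continuous))
    (fun t q ↦ by rw [map_smul, smul_eq_mul, hP.map_smul_mul]) p hv

theorem exists_escapeRate_pos (hd : 2 ≤ d) :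
    ∃ R > 0, ∀ (p : E) (z : ℂ), R * (1 + ‖p‖) ≤ ‖P p z‖ → 0 < escapeRate d (P p) z := by
  obtain ⟨R, hR, hgrow⟩ := hP.exists_two_mul_norm_le_norm_map hd
  refine ⟨R, hR, fun p z hz ↦ ?_⟩
  obtain ⟨C, hC⟩ := hP.isLogGrowthFamily.exists_hasLogGrowth {p} isCompact_singleton
  refine ((hC p rfl).escapeRate_nonneg hd z).lt_of_ne' fun h0 ↦
    not_isBounded_range_iterate (f := P p) (by positivity) (hgrow p) hz ?_
  rw [(hC p rfl).isBounded_range_iterate_iff hd]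
  simpa [h0] using (hC p rfl).escapeRate_iterate hd 1 z

end Growth

variable (hd : 2 ≤ d) (hP : IsHomogeneousFamily d P)
include hd hP

theorem eventually_escapeRate_pos (c : E →L[ℂ] ℂ) (p : E) {v : E} (hv : P v (c v) ≠ 0) :
    ∀ᶠ s in Bornology.cobounded ℂ, 0 < escapeRate d (P (p + s • v)) (c (p + s • v)) := by
  obtain ⟨R, hR, hpos⟩ := hP.exists_escapeRate_pos hd
  have hκ : 0 < ‖P v (c v)‖ / 2 := half_pos (norm_pos_iff.2 hv)
  have hlarge := (tendsto_norm_cobounded_atTop (E := ℂ)).eventually_ge_atTop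
  filter_upwards [hP.eventually_le_norm_map_add_smul c p hv, hlarge 1,
    hlarge (R * (1 + ‖p‖ + ‖v‖) / (‖P v (c v)‖ / 2))] with s hs hs1 hsR
  have hnorm : 1 + ‖p + s • v‖ ≤ (1 + ‖p‖ + ‖v‖) * ‖s‖ := by
    have htri : ‖p + s • v‖ ≤ ‖p‖ + ‖s‖ * ‖v‖ := norm_smul s v ▸ norm_add_le p (s • v)
    nlinarith [norm_nonneg p]
  refine hpos _ _ ?_
  calc R * (1 + ‖p + s • v‖) ≤ R * (1 + ‖p‖ + ‖v‖) * ‖s‖ := by rw [mul_assoc]; gcongr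
    _ ≤ ‖P v (c v)‖ / 2 * ‖s‖ * ‖s‖ := by gcongr ?_ * _; exact (div_le_iff₀' hκ).1 hsR
    _ = ‖P v (c v)‖ / 2 * ‖s‖ ^ 2 := by ring
    _ ≤ ‖P v (c v)‖ / 2 * ‖s‖ ^ d := by gcongr
    _ ≤ ‖P (p + s • v) (c (p + s • v))‖ := hs

theorem escapeRate_add_eq_of_eventuallyEq {c c' : E →L[ℂ] ℂ} {p v : E} (hv : P v (c v) ≠ 0)
    (hp : 0 < escapeRate d (P p) (c p))
    (heq : (fun p ↦ escapeRate d (P p) (c p)) =ᶠ[𝓝 p] fun p ↦ escapeRate d (P p) (c' p))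
    (hpv : 0 < escapeRate d (P (p + v)) (c (p + v))) :
    escapeRate d (P (p + v)) (c (p + v)) = escapeRate d (P (p + v)) (c' (p + v)) := by
  let γ (c : E →L[ℂ] ℂ) (s : ℂ) : E × ℂ := (p + s • v, c (p + s • v))
  have hγ (c : E →L[ℂ] ℂ) : Differentiable ℂ (γ c) := by fun_prop
  have hfam := hP.isLogGrowthFamily
  have hcont (c : E →L[ℂ] ℂ) := (hfam.continuous_escapeRate hd).comp (hγ c).continuous
  have hline : Tendsto (fun s : ℂ ↦ p + s • v) (𝓝 0) (𝓝 p) :=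
    Continuous.tendsto' (by fun_prop) _ _ (by simp)
  have heqOn := eqOn_setOf_pos_of_eventuallyEq (hcont c) (hcont c')
    (fun s hs ↦ HarmonicAt.analyticAt (hfam.harmonicAt_escapeRate_comp hd (hγ c) hs))
    (fun s hs ↦ HarmonicAt.analyticAt (hfam.harmonicAt_escapeRate_comp hd (hγ c') hs))
    (hfam.isPreconnected_setOf_escapeRate_comp_pos hd (hγ c)
      (hP.eventually_escapeRate_pos hd c p hv))
    (x₀ := 0) (by simpa [γ] using hp) (hline.eventually heq)
  simpa [γ] using heqOn (x := 1) (by simpa [γ] using hpv)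

theorem not_eventuallyEq_escapeRate {c c' : E →L[ℂ] ℂ} {q : E} (hq : P q (c q) ≠ 0)
    (hc' : c' q = 0) (hq0 : P q 0 = 0) {p : E} (hp : 0 < escapeRate d (P p) (c p)) :
    ¬ (fun p ↦ escapeRate d (P p) (c p)) =ᶠ[𝓝 p] fun p ↦ escapeRate d (P p) (c' p) := by
  intro heq
  obtain ⟨t, htpos, htvalue, ht0⟩ := ((hP.eventually_escapeRate_pos hd c 0 hq).and
    ((hP.eventually_le_norm_map_add_smul c (-p) hq).and
      (Bornology.eventually_ne_cobounded 0))).exists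
  have hv : P (-p + t • q) (c (-p + t • q)) ≠ 0 :=
    norm_pos_iff.1 (lt_of_lt_of_le (by positivity) htvalue)
  have hfixed : Function.IsFixedPt (P (t • q)) 0 := by
    simpa [Function.IsFixedPt, hq0] using hP.map_smul_mul t q 0
  have hzero : escapeRate d (P (t • q)) (c' (t • q)) = 0 := by
    rw [map_smul, hc', smul_zero]
    refine escapeRate_eq_zero_of_isBounded hd ?_
    simp [(hfixed.iterate _).eq]
  have htie := hP.escapeRate_add_eq_of_eventuallyEq hd hv hp heq
  rw [add_neg_cancel_left, hzero] at htie
  rw [zero_add] at htpos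
  exact htpos.ne' (htie htpos)

end IsHomogeneousFamily

end Homogeneous

section CriticalPoints

theorem sigmaE_eq_sum {n : ℕ} (c : Fin n → ℂ) (m : ℕ) :
    sigmaE c m = ∑ s ∈ Finset.univ.powersetCard m, ∏ i ∈ s, c i :=
  Finset.esymm_map_val c Finset.univ m

theorem differentiable_sigmaE {n : ℕ} (m : ℕ) :
    Differentiable ℂ fun c : Fin n → ℂ ↦ sigmaE c m := by
  simp only [sigmaE_eq_sum]
  fun_prop

theorem sigmaE_smul {n : ℕ} (t : ℂ) (c : Fin n → ℂ) (m : ℕ) :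
    sigmaE (t • c) m = t ^ m * sigmaE c m := by
  rw [sigmaE_eq_sum, sigmaE_eq_sum, Finset.mul_sum]
  refine Finset.sum_congr rfl fun s hs ↦ ?_
  simp [Finset.prod_mul_distrib, (Finset.mem_powersetCard.1 hs).2]

theorem sigmaE_single_one {n : ℕ} (k : Fin n) {m : ℕ} (hm : m ≠ 0) :
    sigmaE (Pi.single k 1) m = if m = 1 then 1 else 0 := by
  rw [sigmaE_eq_sum]
  split_ifs with hm1
  · simp [hm1, Finset.powersetCard_one]
  · refine Finset.sum_eq_zero fun s hs ↦ ?_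
    obtain ⟨i, his, hik⟩ := Finset.exists_mem_ne
      (by rw [(Finset.mem_powersetCard.1 hs).2]; lia : 1 < s.card) k
    exact Finset.prod_eq_zero his (Pi.single_eq_of_ne hik 1)

variable {d : ℕ}

theorem Pca_zero_right (hd : d ≠ 0) (c : Fin (d - 2) → ℂ) (a : ℂ) : Pca d c a 0 = a ^ d := by
  rw [Pca, Finset.sum_eq_zero fun j hj ↦ ?_]
  · simp [hd]
  · have hj0 : j ≠ 0 := by grind
    simp [hj0]

theorem Pca_zero_zero (hd : d ≠ 0) (z : ℂ) : Pca d 0 0 z = z ^ d / d := by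
  rw [Pca, Finset.sum_eq_zero fun j hj ↦ ?_]
  · simp [hd]
  · have hdj : d - j ≠ 0 := by grind
    have hsigma : sigmaE (0 : Fin (d - 2) → ℂ) (d - j) = 0 := by
      simpa [hdj] using sigmaE_smul 0 (0 : Fin (d - 2) → ℂ) (d - j)
    simp [hsigma]

theorem Pca_single_one_zero (k : Fin (d - 2)) (z : ℂ) :
    Pca d (Pi.single k 1) 0 z = z ^ d / d - z ^ (d - 1) / (d - 1 : ℕ) := by
  have hd : 3 ≤ d := by have := k.isLt; lia
  rw [Pca, Finset.sum_eq_single_of_mem (d - 1) (by grind) fun j hj hj1 ↦ ?_]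
  · rw [sigmaE_single_one k (by lia), if_pos (by lia), Nat.sub_sub_self (by lia),
      zero_pow (by lia)]
    ring
  · rw [sigmaE_single_one k (by grind), if_neg (by grind)]
    simp

theorem isHomogeneousFamily_Pca (hd : d ≠ 0) :
    IsHomogeneousFamily d fun p : (Fin (d - 2) → ℂ) × ℂ ↦ Pca d p.1 p.2 where
  differentiable := by
    have hsigma (m : ℕ) :
        Differentiable ℂ fun q : ((Fin (d - 2) → ℂ) × ℂ) × ℂ ↦ sigmaE q.1.1 m :=
      (differentiable_sigmaE m).comp (differentiable_fst.comp differentiable_fst)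
    unfold Function.uncurry Pca
    fun_prop
  map_smul_mul t p z := by
    simp only [Pca, Prod.smul_fst, Prod.smul_snd, smul_eq_mul, mul_add, Finset.mul_sum]
    congr 2
    · ring
    · refine Finset.sum_congr rfl fun j hj ↦ ?_
      have hpow : t ^ d = t ^ (d - j) * t ^ j := by rw [← pow_add, Nat.sub_add_cancel (by grind)]
      rw [sigmaE_smul, mul_pow, hpow]
      ring
    · ring
  map_zero_one_ne_zero := by
    simp [Pca_zero_zero hd, hd]

/-- The critical point `critPt c i`, as a linear function of the parameter `(c, a)`. -/
noncomputable def critPtCLM (i : Fin (d - 1)) : ((Fin (d - 2) → ℂ) × ℂ) →L[ℂ] ℂ :=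
  if h : (i : ℕ) = 0 then 0 else
    .comp (.proj ⟨i - 1, by lia⟩) (.fst ℂ (Fin (d - 2) → ℂ) ℂ)

theorem critPtCLM_apply (i : Fin (d - 1)) (p : (Fin (d - 2) → ℂ) × ℂ) :
    critPtCLM i p = critPt p.1 i := by
  by_cases hi : (i : ℕ) = 0 <;> simp [critPtCLM, critPt, hi]

/-- The Green function of `P_{c,a}` at its critical point of index `i`, as a function of the
parameter `(c, a)`. -/
noncomputable def critGreen (i : Fin (d - 1)) (p : (Fin (d - 2) → ℂ) × ℂ) : ℝ :=
  green d p.1 p.2 (critPt p.1 i)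

theorem green_eq_escapeRate (c : Fin (d - 2) → ℂ) (a z : ℂ) :
    green d c a z = escapeRate d (Pca d c a) z := by
  simp only [green, escapeRate, escapeApprox, Real.posLog_eq_log_max_one (norm_nonneg _)]

theorem critGreen_eq_escapeRate (i : Fin (d - 1)) :
    critGreen i = fun p ↦ escapeRate d (Pca d p.1 p.2) (critPtCLM i p) := by
  funext p
  rw [critGreen, green_eq_escapeRate, critPtCLM_apply]

theorem isLogGrowthFamily_Pca (hd : 2 ≤ d) :
    IsLogGrowthFamily d fun p : (Fin (d - 2) → ℂ) × ℂ ↦ Pca d p.1 p.2 :=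
  (isHomogeneousFamily_Pca (by lia)).isLogGrowthFamily

theorem continuous_critGreen (hd : 2 ≤ d) (i : Fin (d - 1)) : Continuous (critGreen i) := by
  rw [critGreen_eq_escapeRate]
  exact (((isLogGrowthFamily_Pca hd).continuous_escapeRate hd).comp
    (continuous_id.prodMk (critPtCLM i).continuous) :)

theorem critGreen_nonneg (hd : 2 ≤ d) (i : Fin (d - 1)) (p : (Fin (d - 2) → ℂ) × ℂ) :
    0 ≤ critGreen i p := by
  rw [critGreen_eq_escapeRate]
  exact (isLogGrowthFamily_Pca hd).escapeRate_nonneg hd _ _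

theorem mem_connLocus_iff (hd : 2 ≤ d) {p : (Fin (d - 2) → ℂ) × ℂ} :
    p ∈ connLocus d ↔ ∀ i, critGreen i p = 0 := by
  obtain ⟨C, hC⟩ := (isLogGrowthFamily_Pca hd).exists_hasLogGrowth {p} isCompact_singleton
  refine forall_congr' fun i ↦ ?_
  rw [critGreen, green_eq_escapeRate]
  exact (hC p rfl).isBounded_range_iterate_iff hd

theorem mem_compl_connLocus_iff (hd : 2 ≤ d) {p : (Fin (d - 2) → ℂ) × ℂ} :
    p ∈ (connLocus d)ᶜ ↔ ∃ i, 0 < critGreen i p := by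
  simp [mem_connLocus_iff hd, (critGreen_nonneg hd _ p).lt_iff_ne']

theorem isOpen_compl_connLocus (hd : 2 ≤ d) : IsOpen (connLocus d)ᶜ := by
  simp only [isOpen_iff_mem_nhds, mem_compl_connLocus_iff hd]
  rintro p ⟨i, hi⟩
  filter_upwards [(continuous_critGreen hd i).continuousAt.eventually_const_lt hi] with q hq
  exact (mem_compl_connLocus_iff hd).2 ⟨i, hq⟩

theorem Uset_eq_setOf_exists_forall_lt :
    Uset d = {p | ∃ i, ∀ j ≠ i, critGreen j p < critGreen i p} :=
  Set.ext fun p ↦ exists_strictMono_enumeration_iff (critGreen · p)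

theorem exists_critPtCLM_eq_one {i : Fin (d - 1)} (hi : (i : ℕ) ≠ 0) :
    ∃ k : Fin (d - 2), ∀ j : Fin (d - 1),
      critPtCLM j (Pi.single k 1, 0) = if j = i then 1 else 0 := by
  refine ⟨⟨i - 1, by lia⟩, fun j ↦ ?_⟩
  rw [critPtCLM_apply, critPt]
  split_ifs with hj hji hji
  · exact absurd (hji ▸ hj) hi
  · rfl
  · simp [hji]
  · exact Pi.single_eq_of_ne (by grind) 1

theorem not_eventuallyEq_critGreen {i j : Fin (d - 1)} (hij : i ≠ j)
    {p : (Fin (d - 2) → ℂ) × ℂ} (hp : 0 < critGreen i p) :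
    ¬ critGreen i =ᶠ[𝓝 p] critGreen j := by
  wlog hi : (i : ℕ) ≠ 0 generalizing i j
  · intro heq
    exact this hij.symm (heq.self_of_nhds ▸ hp) (by grind) heq.symm
  obtain ⟨k, hk⟩ := exists_critPtCLM_eq_one hi
  have hd : 3 ≤ d := by have := k.isLt; lia
  have hvalue : Pca d (Pi.single k 1) 0 (critPtCLM i (Pi.single k 1, 0)) ≠ 0 := by
    rw [hk, if_pos rfl, Pca_single_one_zero, one_pow, one_pow, sub_ne_zero]
    simp only [one_div, ne_eq, inv_inj, Nat.cast_inj]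
    lia
  rw [critGreen_eq_escapeRate] at hp
  rw [critGreen_eq_escapeRate, critGreen_eq_escapeRate]
  exact (isHomogeneousFamily_Pca (by lia)).not_eventuallyEq_escapeRate (by lia) hvalue
    (by rw [hk, if_neg hij.symm]) (by simp [Pca_zero_right, show d ≠ 0 by lia]) hp

end CriticalPoints

/-- `U` is open, contained in the complement of the connectedness locus, and dense in it. -/
theorem stmt7 (d : ℕ) (hd : 3 ≤ d) :
    IsOpen (Uset d) ∧ Uset d ⊆ (connLocus d)ᶜ ∧ (connLocus d)ᶜ ⊆ closure (Uset d) := by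
  have hd2 : 2 ≤ d := by lia
  have : Nontrivial (Fin (d - 1)) := Fin.nontrivial_iff_two_le.2 (by lia)
  rw [Uset_eq_setOf_exists_forall_lt]
  refine ⟨isOpen_setOf_exists_forall_lt (continuous_critGreen hd2), ?_, ?_⟩
  · rintro p ⟨i, hi⟩
    obtain ⟨j, hji⟩ := exists_ne i
    exact (mem_compl_connLocus_iff hd2).2 ⟨i, (critGreen_nonneg hd2 j p).trans_lt (hi j hji)⟩
  · refine subset_closure_setOf_exists_forall_lt (continuous_critGreen hd2)
      (isOpen_compl_connLocus hd2) fun p hp i j hij hmax ↦ ?_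
    obtain ⟨k, hk⟩ := (mem_compl_connLocus_iff hd2).1 hp
    exact not_eventuallyEq_critGreen hij (hk.trans_le (hmax k))
end
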